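/- arXiv:math/0110223 — 2 statements merged into one kernel-verified Lean document; each statement's English description precedes it below -/
import Mathlib

section
/- Let p be an odd prime and H a Hopf algebra over k with antipode S such that the distinguished group-like element g of H and the distinguished group-like element α of H* both have order p. Then the trace of the linear map S^{2p} on H equals p²·d (as an element of k) for some integer d. -/
open scoped TensorProduct

/-- A group-like element of a coalgebra: a nonzero element `a` with `Δ a = a ⊗ a`. -/
def IsGroupLike (k : Type*) {H : Type*} [CommSemiring k] [AddCommMonoid H] [Module k H]
    [Coalgebra k H] (a : H) : Prop :=
  a ≠ 0 ∧ Coalgebra.comul (R := k) a = a ⊗ₜ[k] a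

/-- The convolution product on the dual of a coalgebra. -/
noncomputable def conv {k H : Type*} [CommSemiring k] [AddCommMonoid H] [Module k H]
    [Coalgebra k H] (f g : Module.Dual k H) : Module.Dual k H :=
  LinearMap.mul' k k ∘ₗ TensorProduct.map f g ∘ₗ Coalgebra.comul

/-- `l ∈ H*` is a right integral of `H*`: `l * β = β(1) • l` for the convolution product. -/
def IsRightIntegralDual (k : Type*) {H : Type*} [CommSemiring k] [Semiring H]
    [HopfAlgebra k H] (l : Module.Dual k H) : Prop :=
  ∀ f : Module.Dual k H, conv l f = f 1 • l

/-- `Λ ∈ H` is a left integral of `H`: `a * Λ = ε(a) • Λ` for all `a`. -/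
def IsLeftIntegral (k : Type*) {H : Type*} [CommSemiring k] [Semiring H]
    [HopfAlgebra k H] (L : H) : Prop :=
  ∀ a : H, a * L = Coalgebra.counit (R := k) a • L

/-- `Λ ∈ H` is a right integral of `H`: `Λ * a = ε(a) • Λ` for all `a`. -/
def IsRightIntegral (k : Type*) {H : Type*} [CommSemiring k] [Semiring H]
    [HopfAlgebra k H] (L : H) : Prop :=
  ∀ a : H, L * a = Coalgebra.counit (R := k) a • L

/-- `g` is the distinguished group-like element of `H`: it is group-like and
`β * λ = β(g) • λ` for some nonzero right integral `λ` of `H*`. -/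
def IsDistinguishedGroupLike (k : Type*) {H : Type*} [CommSemiring k] [Semiring H]
    [HopfAlgebra k H] (g : H) : Prop :=
  IsGroupLike k g ∧ ∃ l : Module.Dual k H, l ≠ 0 ∧ IsRightIntegralDual k l ∧
    ∀ f : Module.Dual k H, conv f l = f g • l

/-- `α` is the distinguished group-like element of `H*`: an algebra map `H → k` with
`Λ * a = α(a) • Λ` for some nonzero left integral `Λ` of `H`. -/
def IsDistinguishedGroupLikeDual (k : Type*) {H : Type*} [CommSemiring k] [Semiring H]
    [HopfAlgebra k H] (α : H →ₐ[k] k) : Prop :=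
  ∃ L : H, L ≠ 0 ∧ IsLeftIntegral k L ∧ ∀ a : H, L * a = α a • L

/-- `IsHopfIndex k g n` : `n` is the index of the Hopf algebra `H` with distinguished
group-like element `g`, i.e. the smallest positive integer `n` with `S ^ (4 n) = id` and
`g ^ n = 1`, where `S` is the antipode. -/
def IsHopfIndex (k : Type*) {H : Type*} [CommSemiring k] [Semiring H] [HopfAlgebra k H]
    (g : H) (n : ℕ) : Prop :=
  0 < n ∧ (HopfAlgebra.antipode (R := k) (A := H) : Module.End k H) ^ (4 * n) = 1 ∧ g ^ n = 1 ∧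
    ∀ m : ℕ, 0 < m → (HopfAlgebra.antipode (R := k) (A := H) : Module.End k H) ^ (4 * m) = 1 →
      g ^ m = 1 → n ≤ m

/-- The simultaneous eigenspace `H^ω_{a,i,j} = {u ∈ H | S² u = (-1)^a ω^i • u, u * g = ω^j • u}`
for `(a,i,j) ∈ ℤ/2 × ℤ/n × ℤ/n`. -/
noncomputable def hopfEigenspace {k H : Type*} [CommRing k] [Ring H] [HopfAlgebra k H]
    (g : H) (ω : k) {n : ℕ} (t : ZMod 2 × ZMod n × ZMod n) : Submodule k H :=
  Module.End.eigenspace ((HopfAlgebra.antipode (R := k) (A := H) : Module.End k H) ^ 2)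
      ((-1 : k) ^ t.1.val * ω ^ t.2.1.val) ⊓
    Module.End.eigenspace (LinearMap.mulRight k g : Module.End k H) (ω ^ t.2.2.val)

/-- Convolution powers of an element of the dual; the zeroth power is the counit,
the unit of the convolution algebra. -/
noncomputable def convPow {k H : Type*} [CommSemiring k] [AddCommMonoid H] [Module k H]
    [Coalgebra k H] (f : Module.Dual k H) : ℕ → Module.Dual k H
  | 0 => Coalgebra.counit
  | m + 1 => conv f (convPow f m)

/-!
Write `S` for the antipode, `T = S^(2p)`, `A` and `B` for the right and left hit actions of `α` on
`H`, `L` for left multiplication by `g`, `R` for right multiplication by `S(g) = g⁻¹`, and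
`D = L R`.

The pairing of the two integrals gives Radford's formula `S⁴ A = D B`, hence `S^(4p) = 1`, and the
trace formula `λ(Λ) Tr(S^(-2)) = ε(Λ) λ(1)`, whose right side vanishes because `g ≠ 1` or `α ≠ ε`.
If `P`, `Q` are commuting operators of order `p` that commute with the involution `T`, then
averaging `T P^a Q^b` over all `a, b` shows that `∑ Tr(T P^a Q^b)` is `p²` times an integer, while
Galois conjugation makes `Tr(T P^a Q^b)` constant on each line through the origin of `(ℤ/p)²`, with
the origin removed.

The individual traces are compared through the invertible Galois map `x ⊗ y ↦ (x ⊗ 1) Δ(y)`: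
conjugating tensor products of operators by it yields `Tr(φ) Tr(φ R) = Tr(φ R)²` and similar
identities, so `Tr(φ R^b)` and `Tr(φ A^b)` are either `0` or `Tr(φ)`. If `Tr(T R) = 0` or
`Tr(T A) = 0`, take `P = S^(2p-2)` and `Q` equal to `R` or `A`: all terms but `Tr(T)` vanish.
Otherwise take `P = D` and `Q = A`: every term is `0` or `Tr(T)`, and `Tr(T D A^(-1)) = 0` because
`D B A^(-1) = S⁴`, so the number of lines that contribute is such that the total is `Tr(T)` times an
integer prime to `p`.
-/

section FiniteOrder

variable {k V : Type*} [Field k] [AddCommGroup V] [Module k V]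

/-- The average `(1/p) ∑ Qⁱ` of the powers of `Q`; if `Q ^ p = 1` it is the projection onto the
fixed space of `Q`. -/
noncomputable def powAverage (p : ℕ) (Q : Module.End k V) : Module.End k V :=
  (p : k)⁻¹ • ∑ i ∈ Finset.range p, Q ^ i

theorem commute_powAverage_right {p : ℕ} {T Q : Module.End k V} (h : Commute T Q) :
    Commute T (powAverage p Q) :=
  (Commute.sum_right _ _ _ fun i _ ↦ h.pow_right i).smul_right _

theorem isIdempotentElem_powAverage [CharZero k] {p : ℕ} (hp : p ≠ 0) {Q : Module.End k V}
    (hQ : Q ^ p = 1) : IsIdempotentElem (powAverage p Q) := by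
  have hmul : Q * ∑ i ∈ Finset.range p, Q ^ i = ∑ i ∈ Finset.range p, Q ^ i := by
    simpa [sub_mul, hQ, sub_eq_zero] using mul_geom_sum Q p
  have hpow (j : ℕ) : Q ^ j * ∑ i ∈ Finset.range p, Q ^ i = ∑ i ∈ Finset.range p, Q ^ i := by
    induction j with
    | zero => rw [pow_zero, one_mul]
    | succ j ih => rw [pow_succ, mul_assoc, hmul, ih]
  have hp' : (p : k) ≠ 0 := Nat.cast_ne_zero.2 hp
  rw [IsIdempotentElem, powAverage, smul_mul_smul_comm, Finset.sum_mul]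
  simp_rw [hpow]
  rw [Finset.sum_const, Finset.card_range, ← Nat.cast_smul_eq_nsmul k, smul_smul, mul_assoc,
    inv_mul_cancel₀ hp', mul_one]

variable [FiniteDimensional k V]

theorem isInternal_eigenspace_of_pow_eq_one [IsAlgClosed k] {m : ℕ} {ω : k}
    (hω : IsPrimitiveRoot ω m) (hm : (m : k) ≠ 0) {X : Module.End k V} (hX : X ^ m = 1) :
    DirectSum.IsInternal fun j : Fin m ↦ X.eigenspace (ω ^ (j : ℕ)) := by
  have : NeZero m := ⟨by rintro rfl; simp at hm⟩
  have hss : X.IsSemisimple := Module.End.isSemisimple_of_squarefree_aeval_eq_zero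
    (Polynomial.X_pow_sub_one_separable_iff.2 hm).squarefree (by simp [hX])
  rw [DirectSum.isInternal_submodule_iff_iSupIndep_and_iSup_eq_top]
  refine ⟨X.eigenspaces_iSupIndep.comp fun i j h ↦ Fin.ext (hω.pow_inj i.2 j.2 h), ?_⟩
  rw [eq_top_iff, ← hss.iSup_eigenspace_eq_top]
  refine iSup_le fun μ v hv ↦ ?_
  rcases eq_or_ne v 0 with rfl | hv0
  · exact zero_mem _
  have hμ : μ ^ m = 1 := by
    have hXv := (Module.End.hasEigenvector_iff.2 ⟨hv, hv0⟩).pow_apply m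
    rw [hX, Module.End.one_apply] at hXv
    exact smul_left_injective k hv0 (by simpa using hXv.symm)
  obtain ⟨j, hj, rfl⟩ := hω.eq_pow_of_pow_eq_one hμ
  exact Submodule.mem_iSup_of_mem ⟨j, hj⟩ hv

theorem trace_pow_eq_sum_of_pow_eq_one [IsAlgClosed k] {m : ℕ} {ω : k}
    (hω : IsPrimitiveRoot ω m) (hm : (m : k) ≠ 0) {X : Module.End k V} (hX : X ^ m = 1) (i : ℕ) :
    LinearMap.trace k V (X ^ i) =
      ∑ j : Fin m, (Module.finrank k (X.eigenspace (ω ^ (j : ℕ))) : k) * (ω ^ i) ^ (j : ℕ) := by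
  have hmap (j : Fin m) : Set.MapsTo (X ^ i) (X.eigenspace (ω ^ (j : ℕ)))
      (X.eigenspace (ω ^ (j : ℕ))) :=
    Module.End.mapsTo_genEigenspace_of_comm ((Commute.refl X).pow_right i) _ _
  rw [LinearMap.trace_eq_sum_trace_restrict (isInternal_eigenspace_of_pow_eq_one hω hm hX) hmap]
  refine Finset.sum_congr rfl fun j _ ↦ ?_
  have hscalar : (X ^ i).restrict (hmap j) = ((ω ^ i) ^ (j : ℕ)) • LinearMap.id := by
    ext ⟨v, hv⟩
    change (X ^ i) v = (ω ^ i) ^ (j : ℕ) • v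
    rcases eq_or_ne v 0 with rfl | hv0
    · simp
    · rw [(Module.End.hasEigenvector_iff.2 ⟨hv, hv0⟩).pow_apply i, pow_right_comm]
  rw [hscalar, map_smul, LinearMap.trace_id, smul_eq_mul, mul_comm]

theorem trace_pow_eq_intCast_of_coprime [CharZero k] {m : ℕ} (hm : 0 < m) {X : Module.End k V}
    (hX : X ^ m = 1) {n : ℤ} (hn : LinearMap.trace k V X = n) {i : ℕ} (hi : i.Coprime m) :
    LinearMap.trace k V (X ^ i) = n := by
  let K := AlgebraicClosure k
  have : CharZero K := charZero_of_injective_algebraMap (algebraMap k K).injective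
  have hmK : (m : K) ≠ 0 := Nat.cast_ne_zero.2 hm.ne'
  have : NeZero (m : K) := ⟨hmK⟩
  have : NeZero m := ⟨hm.ne'⟩
  obtain ⟨ω, hω⟩ := HasEnoughRootsOfUnity.exists_primitiveRoot K m
  let Y : Module.End K (TensorProduct k K V) := X.baseChange K
  have hY : Y ^ m = 1 := by rw [← LinearMap.baseChange_pow, hX, LinearMap.baseChange_one]
  have htrace (j : ℕ) :
      LinearMap.trace K _ (Y ^ j) = algebraMap k K (LinearMap.trace k V (X ^ j)) := by
    rw [← LinearMap.baseChange_pow, LinearMap.trace_baseChange]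
  let f : Polynomial ℤ :=
    ∑ j : Fin m, Polynomial.C (Module.finrank K (Y.eigenspace (ω ^ (j : ℕ))) : ℤ) *
      Polynomial.X ^ (j : ℕ)
  have hf (j : ℕ) : Polynomial.aeval (ω ^ j) f = algebraMap k K (LinearMap.trace k V (X ^ j)) := by
    rw [← htrace, trace_pow_eq_sum_of_pow_eq_one hω hmK hY]
    simp [f]
  have hroot : Polynomial.aeval ω (f - Polynomial.C n) = 0 := by
    have := hf 1
    rw [pow_one, pow_one, hn] at this
    simp [this]
  have hdvd := minpoly.isIntegrallyClosed_dvd (hω.isIntegral hm) hroot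
  rw [hω.minpoly_eq_pow_coprime hi] at hdvd
  have hroot' := Polynomial.aeval_eq_zero_of_dvd_aeval_eq_zero hdvd (minpoly.aeval ℤ (ω ^ i))
  rw [map_sub, hf, sub_eq_zero] at hroot'
  exact (algebraMap k K).injective (by simpa using hroot')

theorem trace_pow_two_mul_add_four_eq_zero [CharZero k] {p : ℕ} (hp : 1 < p) (hpodd : Odd p)
    {X : Module.End k V} (hX : X ^ (4 * p) = 1)
    (hX0 : LinearMap.trace k V (X ^ (4 * p - 2)) = 0) :
    LinearMap.trace k V (X ^ (2 * p + 4)) = 0 := by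
  have hX' : (X ^ (4 * p - 2)) ^ (2 * p) = 1 := by
    have hexp' : (4 * p - 2) * (2 * p) = 4 * p * (2 * p - 1) := by
      rw [show 4 * p - 2 = 2 * (2 * p - 1) by omega]
      ring
    rw [← pow_mul, hexp', pow_mul, hX, one_pow]
  have hcop : (p - 2).Coprime (2 * p) :=
    Nat.Coprime.mul_right (Nat.coprime_two_right.2 (Nat.Odd.sub_even hp hpodd even_two))
      ((Nat.coprime_self_sub_left hp).2 (Nat.coprime_two_left.2 hpodd))
  have hexp : (4 * p - 2) * (p - 2) = 2 * p + 4 + 4 * p * (p - 3) := by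
    obtain ⟨m, rfl⟩ := Nat.exists_eq_add_of_le (show 3 ≤ p by grind)
    grind
  have htrace := trace_pow_eq_intCast_of_coprime (by omega) hX' (n := 0) (by simpa using hX0) hcop
  rw [← pow_mul, hexp, pow_add, pow_mul _ (4 * p), hX, one_pow, mul_one] at htrace
  simpa using htrace

theorem trace_mul_pow_eq_intCast [CharZero k] {p : ℕ} (hp : p.Prime) (hpodd : Odd p)
    {T R : Module.End k V} (hT : T ^ 2 = 1) (hR : R ^ p = 1) (hTR : Commute T R) {n : ℤ}
    (hn : LinearMap.trace k V (T * R) = n) {i : ℕ} (hi : ¬ p ∣ i) :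
    LinearMap.trace k V (T * R ^ i) = n := by
  wlog hiodd : Odd i generalizing i
  · have := this (i := i + p) (by simpa using hi) (by grind)
    rwa [pow_add, hR, mul_one] at this
  have hpow : (T * R) ^ (2 * p) = 1 := by
    rw [hTR.mul_pow, pow_mul, hT, one_pow, one_mul, mul_comm, pow_mul, hR, one_pow]
  have hcop : i.Coprime (2 * p) := Nat.Coprime.mul_right (Nat.coprime_two_right.2 hiodd)
    ((hp.coprime_iff_not_dvd.2 hi).symm)
  have hTi : T ^ i = T := by
    obtain ⟨j, rfl⟩ := hiodd
    rw [pow_succ, pow_mul, hT, one_pow, one_mul]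
  rw [← trace_pow_eq_intCast_of_coprime (by have := hp.pos; omega) hpow hn hcop, hTR.mul_pow, hTi]

theorem exists_trace_eq_intCast_of_isIdempotentElem {E : Module.End k V}
    (hE : IsIdempotentElem E) : ∃ n : ℤ, LinearMap.trace k V E = n :=
  ⟨Module.finrank k E.range, by
    rw [(LinearMap.isProj_range_iff_isIdempotentElem E |>.2 hE).trace, Int.cast_natCast]⟩

theorem exists_trace_mul_eq_intCast_of_isIdempotentElem [CharZero k] {T E : Module.End k V}
    (hT : T ^ 2 = 1) (hE : IsIdempotentElem E) (hTE : Commute T E) :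
    ∃ n : ℤ, LinearMap.trace k V (T * E) = n := by
  have hPE : IsIdempotentElem (powAverage 2 T * E) :=
    (isIdempotentElem_powAverage two_ne_zero hT).mul_of_commute
      (commute_powAverage_right hTE.symm).symm hE
  obtain ⟨m, hm⟩ := exists_trace_eq_intCast_of_isIdempotentElem hPE
  obtain ⟨n, hn⟩ := exists_trace_eq_intCast_of_isIdempotentElem hE
  have hdecomp : T * E = (2 : k) • (powAverage 2 T * E) - E := by
    simp [powAverage, Finset.sum_range_succ, add_mul, smul_smul]
  exact ⟨2 * m - n, by rw [hdecomp, map_sub, map_smul, hm, hn]; simp⟩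

theorem exists_sum_trace_mul_pow_mul_pow_eq [CharZero k] {p : ℕ} (hp : p ≠ 0)
    {T P Q : Module.End k V} (hT : T ^ 2 = 1) (hP : P ^ p = 1) (hQ : Q ^ p = 1)
    (hTP : Commute T P) (hTQ : Commute T Q) (hPQ : Commute P Q) :
    ∃ n : ℤ, ∑ a ∈ Finset.range p, ∑ b ∈ Finset.range p,
      LinearMap.trace k V (T * (P ^ a * Q ^ b)) = (p : k) ^ 2 * n := by
  have hE : IsIdempotentElem (powAverage p P * powAverage p Q) :=
    (isIdempotentElem_powAverage hp hP).mul_of_commute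
      (commute_powAverage_right (commute_powAverage_right hPQ).symm).symm
      (isIdempotentElem_powAverage hp hQ)
  obtain ⟨n, hn⟩ := exists_trace_mul_eq_intCast_of_isIdempotentElem hT hE
    ((commute_powAverage_right hTP).mul_right (commute_powAverage_right hTQ))
  refine ⟨n, ?_⟩
  have hp' : (p : k) ≠ 0 := Nat.cast_ne_zero.2 hp
  simp_rw [← hn, powAverage, smul_mul_smul_comm, Finset.sum_mul_sum, mul_smul_comm,
    map_smul, smul_eq_mul, Finset.mul_sum, map_sum]
  field_simp

end FiniteOrder

theorem sum_range_pow_mul_eq {M : Type*} [Semiring M] {p a : ℕ} (ha : a.Coprime p)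
    {Q : M} (hQ : Q ^ p = 1) :
    ∑ b ∈ Finset.range p, Q ^ (a * b) = ∑ b ∈ Finset.range p, Q ^ b := by
  rcases p.eq_zero_or_pos with rfl | hp0
  · simp
  have hmaps : Set.MapsTo (fun b ↦ a * b % p) (Finset.range p) (Finset.range p) :=
    fun b _ ↦ Finset.mem_coe.2 (Finset.mem_range.2 (Nat.mod_lt _ hp0))
  have hinj : Set.InjOn (fun b ↦ a * b % p) (Finset.range p) := fun b hb c hc hbc ↦
    (Nat.ModEq.cancel_left_of_coprime ha.symm hbc).eq_of_lt_of_lt (Finset.mem_range.1 hb)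
      (Finset.mem_range.1 hc)
  exact Finset.sum_nbij _ hmaps hinj (Finset.surjOn_of_injOn_of_card_le _ hmaps hinj le_rfl)
    fun b _ ↦ pow_eq_pow_mod _ hQ

section TraceDivisibility

variable {k V : Type*} [Field k] [CharZero k] [AddCommGroup V] [Module k V]
  [FiniteDimensional k V] {p : ℕ} {T P Q : Module.End k V}

theorem sum_trace_mul_pow_eq (hp : p.Prime) (hpodd : Odd p) (hT : T ^ 2 = 1) (hQ : Q ^ p = 1)
    (hTQ : Commute T Q) {n : ℤ} (hn : LinearMap.trace k V (T * Q) = n) :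
    ∑ b ∈ Finset.range p, LinearMap.trace k V (T * Q ^ b) =
      LinearMap.trace k V T + (p - 1) * n := by
  rw [← Nat.sub_add_cancel hp.one_le, Finset.sum_range_succ', pow_zero, mul_one, add_comm,
    Finset.sum_congr rfl (g := fun _ ↦ (n : k))]
  · simp
  · intro b hb
    refine trace_mul_pow_eq_intCast hp hpodd hT hQ hTQ hn ?_
    exact Nat.not_dvd_of_pos_of_lt b.succ_pos (by have := Finset.mem_range.1 hb; omega)

theorem sum_trace_mul_pow_mul_pow_eq (hp : p.Prime) (hpodd : Odd p) (hT : T ^ 2 = 1)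
    (hP : P ^ p = 1) (hQ : Q ^ p = 1) (hTP : Commute T P) (hTQ : Commute T Q) (hPQ : Commute P Q)
    {n : ℤ} {m : ℕ → ℤ} (hn : LinearMap.trace k V (T * Q) = n)
    (hm : ∀ b, LinearMap.trace k V (T * (P * Q ^ b)) = m b) :
    ∑ a ∈ Finset.range p, ∑ b ∈ Finset.range p, LinearMap.trace k V (T * (P ^ a * Q ^ b)) =
      LinearMap.trace k V T + (p - 1) * (n + ∑ b ∈ Finset.range p, m b) := by
  have hline (b : ℕ) : (P * Q ^ b) ^ p = 1 := by
    rw [(hPQ.pow_right b).mul_pow, hP, pow_right_comm, hQ, one_pow, one_mul]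
  have hreindex (a : ℕ) (ha : a ∈ Finset.range (p - 1)) :
      ∑ b ∈ Finset.range p, LinearMap.trace k V (T * (P ^ (a + 1) * Q ^ b)) =
        ∑ b ∈ Finset.range p, (m b : k) := by
    have hndvd : ¬ p ∣ a + 1 :=
      Nat.not_dvd_of_pos_of_lt a.succ_pos (by have := Finset.mem_range.1 ha; omega)
    rw [← map_sum, ← Finset.mul_sum, ← Finset.mul_sum,
      ← sum_range_pow_mul_eq (hp.coprime_iff_not_dvd.2 hndvd).symm hQ, Finset.mul_sum,
      Finset.mul_sum, map_sum]
    refine Finset.sum_congr rfl fun b _ ↦ ?_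
    rw [← trace_mul_pow_eq_intCast hp hpodd hT (hline b) (hTP.mul_right (hTQ.pow_right b)) (hm b)
      hndvd, (hPQ.pow_right b).mul_pow, ← pow_mul, mul_comm b]
  rw [← Nat.sub_add_cancel hp.one_le, Finset.sum_range_succ', Nat.sub_add_cancel hp.one_le,
    Finset.sum_congr rfl hreindex]
  simp only [pow_zero, one_mul]
  rw [sum_trace_mul_pow_eq hp hpodd hT hQ hTQ hn, Finset.sum_const, Finset.card_range,
    nsmul_eq_mul, Nat.cast_pred hp.pos]
  push_cast
  ring

theorem exists_trace_eq_sq_mul_of_trace_mul_eq_zero (hp : p.Prime) (hpodd : Odd p)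
    (hT : T ^ 2 = 1) (hP : P ^ p = 1) (hQ : Q ^ p = 1) (hTP : Commute T P) (hTQ : Commute T Q)
    (hPQ : Commute P Q) (hTQ0 : LinearMap.trace k V (T * Q) = 0)
    (hTPQ0 : ∀ b, LinearMap.trace k V (T * (P * Q ^ b)) = 0) :
    ∃ d : ℤ, LinearMap.trace k V T = (p : k) ^ 2 * d := by
  obtain ⟨n, hn⟩ := exists_sum_trace_mul_pow_mul_pow_eq hp.ne_zero hT hP hQ hTP hTQ hPQ
  rw [sum_trace_mul_pow_mul_pow_eq hp hpodd hT hP hQ hTP hTQ hPQ (n := 0) (m := 0)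
    (by simpa using hTQ0) (by simpa using hTPQ0)] at hn
  exact ⟨n, by simpa using hn⟩

theorem sq_dvd_of_sq_dvd_add_mul {p r : ℕ} (hp : p.Prime) (hr0 : r ≠ 0) (hrp : r < p) {x : ℤ}
    (h : (p : ℤ) ^ 2 ∣ (p + (p - 1) * r) * x) : (p : ℤ) ^ 2 ∣ x := by
  have hpr : IsCoprime (p : ℤ) r :=
    Nat.isCoprime_iff_coprime.2 (Nat.coprime_of_lt_prime hr0 hrp hp)
  have hcop : IsCoprime (p : ℤ) (p + (p - 1) * r) := by
    rw [show (p : ℤ) + (p - 1) * r = p * (1 + r) + -r by ring]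
    simpa using hpr.neg_right
  exact hcop.pow_left.dvd_of_dvd_mul_left h

theorem exists_trace_eq_sq_mul_of_trace_mul_eq (hp : p.Prime) (hpodd : Odd p)
    (hT : T ^ 2 = 1) (hP : P ^ p = 1) (hQ : Q ^ p = 1) (hTP : Commute T P) (hTQ : Commute T Q)
    (hPQ : Commute P Q) (hTPx : LinearMap.trace k V (T * P) = LinearMap.trace k V T)
    (hTQx : LinearMap.trace k V (T * Q) = LinearMap.trace k V T)
    (hTPQ : ∀ b, LinearMap.trace k V (T * (P * Q ^ b)) = 0 ∨
      LinearMap.trace k V (T * (P * Q ^ b)) = LinearMap.trace k V T)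
    (hlast : LinearMap.trace k V (T * (P * Q ^ (p - 1))) = 0) :
    ∃ d : ℤ, LinearMap.trace k V T = (p : k) ^ 2 * d := by
  classical
  obtain ⟨n, hn⟩ := exists_sum_trace_mul_pow_mul_pow_eq hp.ne_zero hT hP hQ hTP hTQ hPQ
  obtain ⟨x, hx⟩ : ∃ x : ℤ, LinearMap.trace k V T = x := by
    simpa using exists_trace_mul_eq_intCast_of_isIdempotentElem hT .one (.one_right T)
  simp only [hx] at hTPx hTQx hTPQ ⊢
  obtain rfl | hx0 := eq_or_ne x 0
  · exact ⟨0, by simp⟩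
  let m (b : ℕ) : ℤ := if LinearMap.trace k V (T * (P * Q ^ b)) = x then x else 0
  have hm (b : ℕ) : LinearMap.trace k V (T * (P * Q ^ b)) = m b := by
    rcases hTPQ b with h | h <;> simp [m, h]
  let s := {b ∈ Finset.range p | LinearMap.trace k V (T * (P * Q ^ b)) = x}
  have hs0 : s.card ≠ 0 := Finset.card_ne_zero_of_mem (a := 0) (by simp [s, hp.pos, hTPx])
  have hsp : s.card < p := by
    have hlast_mem : ∃ b ∈ Finset.range p, LinearMap.trace k V (T * (P * Q ^ b)) ≠ x :=
      ⟨p - 1, Finset.mem_range.2 (Nat.sub_one_lt hp.ne_zero),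
        by rw [hlast]; exact_mod_cast hx0.symm⟩
    simpa using Finset.card_lt_card (Finset.filter_ssubset.2 hlast_mem)
  have hsum : ∑ b ∈ Finset.range p, m b = s.card * x := by
    rw [← Finset.sum_filter, Finset.sum_const, nsmul_eq_mul]
  rw [sum_trace_mul_pow_mul_pow_eq hp hpodd hT hP hQ hTP hTQ hPQ hTQx hm, hx,
    hsum] at hn
  have hcount : x + (p - 1) * (x + s.card * x) = (p : ℤ) ^ 2 * n := by exact_mod_cast hn
  obtain ⟨d, rfl⟩ := sq_dvd_of_sq_dvd_add_mul hp hs0 hsp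
    (x := x) ⟨n, by linear_combination hcount⟩
  exact ⟨d, by push_cast; rfl⟩

end TraceDivisibility

section HitActions

open Coalgebra WithConv

variable {k H A : Type*} [CommSemiring k] [Semiring H] [Bialgebra k H] [Semiring A] [Algebra k A]

/-- The embedding `f ↦ η ∘ f` of the dual of `H` into the convolution algebra of linear maps
`H → A`, where `η : k → A` is the unit map. -/
noncomputable def scalarConv (A : Type*) [Semiring A] [Algebra k A] (f : Module.Dual k H) :
    WithConv (H →ₗ[k] A) :=
  toConv (Algebra.linearMap k A ∘ₗ f)

theorem scalarConv_counit : scalarConv A (counit : Module.Dual k H) = 1 := rfl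

theorem scalarConv_conv (f c : Module.Dual k H) :
    scalarConv A (conv f c) = scalarConv A f * scalarConv A c :=
  ofConv_injective (LinearMap.algHom_comp_convMul_distrib (Algebra.ofId k A) (toConv f) (toConv c))

/-- The right hit action `h ↦ h ↼ f = f(h₁) h₂` of the dual on `H`. -/
noncomputable def rightHit (f : Module.Dual k H) : Module.End k H :=
  (scalarConv H f * toConv LinearMap.id).ofConv

/-- The left hit action `h ↦ f ⇀ h = h₁ f(h₂)` of the dual on `H`. -/
noncomputable def leftHit (f : Module.Dual k H) : Module.End k H :=
  (toConv LinearMap.id * scalarConv H f).ofConv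

theorem rightHit_eq_sum (f : Module.Dual k H) {h : H} {ι : Type*} (r : Repr k h ι) :
    rightHit f h = ∑ i ∈ r.index, f (r.left i) • r.right i := by
  simp [rightHit, scalarConv, r.convMul_apply, Algebra.smul_def]

theorem leftHit_eq_sum (f : Module.Dual k H) {h : H} {ι : Type*} (r : Repr k h ι) :
    leftHit f h = ∑ i ∈ r.index, f (r.right i) • r.left i := by
  simp [leftHit, scalarConv, r.convMul_apply, Algebra.smul_def, Algebra.commutes]

theorem toConv_comp_rightHit (φ : H →ₗ[k] A) (f : Module.Dual k H) :
    toConv (φ ∘ₗ rightHit f) = scalarConv A f * toConv φ := by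
  ext h
  rw [(ℛ k h).convMul_apply]
  simp [rightHit_eq_sum f (ℛ k h), scalarConv, ← Algebra.smul_def]

theorem toConv_comp_leftHit (φ : H →ₗ[k] A) (f : Module.Dual k H) :
    toConv (φ ∘ₗ leftHit f) = toConv φ * scalarConv A f := by
  ext h
  rw [(ℛ k h).convMul_apply]
  simp [leftHit_eq_sum f (ℛ k h), scalarConv, ← Algebra.smul_def, ← Algebra.commutes]

theorem comp_rightHit (f c : Module.Dual k H) : c ∘ₗ rightHit f = conv f c :=
  toConv_injective (toConv_comp_rightHit c f)

theorem comp_leftHit (f c : Module.Dual k H) : c ∘ₗ leftHit f = conv c f :=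
  toConv_injective (toConv_comp_leftHit c f)

theorem rightHit_counit : rightHit (counit : Module.Dual k H) = 1 := by
  rw [rightHit, scalarConv_counit, one_mul]
  rfl

theorem leftHit_counit : leftHit (counit : Module.Dual k H) = 1 := by
  rw [leftHit, scalarConv_counit, mul_one]
  rfl

theorem rightHit_smul (c : k) (f : Module.Dual k H) : rightHit (c • f) = c • rightHit f := by
  ext h
  simp [rightHit_eq_sum _ (ℛ k h), Finset.smul_sum, mul_smul]

theorem leftHit_smul (c : k) (f : Module.Dual k H) : leftHit (c • f) = c • leftHit f := by
  ext h
  simp [leftHit_eq_sum _ (ℛ k h), Finset.smul_sum, mul_smul]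

theorem rightHit_mul_rightHit (f c : Module.Dual k H) :
    rightHit c * rightHit f = rightHit (conv f c) := by
  apply toConv_injective
  rw [Module.End.mul_eq_comp, toConv_comp_rightHit, rightHit, toConv_ofConv, ← mul_assoc,
    ← scalarConv_conv, rightHit, toConv_ofConv]

theorem leftHit_mul_leftHit (f c : Module.Dual k H) :
    leftHit c * leftHit f = leftHit (conv c f) := by
  apply toConv_injective
  rw [Module.End.mul_eq_comp, toConv_comp_leftHit, leftHit, toConv_ofConv, mul_assoc,
    ← scalarConv_conv, leftHit, toConv_ofConv]

theorem commute_rightHit_leftHit (f c : Module.Dual k H) : Commute (rightHit f) (leftHit c) := by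
  apply toConv_injective
  rw [Module.End.mul_eq_comp, Module.End.mul_eq_comp, toConv_comp_leftHit, toConv_comp_rightHit,
    rightHit, leftHit, toConv_ofConv, toConv_ofConv, mul_assoc]

theorem rightHit_convPow (f : Module.Dual k H) (n : ℕ) :
    rightHit (convPow f n) = rightHit f ^ n := by
  induction n with
  | zero => exact rightHit_counit
  | succ n ih => rw [convPow, ← rightHit_mul_rightHit, ih, pow_succ]

theorem leftHit_convPow (f : Module.Dual k H) (n : ℕ) :
    leftHit (convPow f n) = leftHit f ^ n := by
  induction n with
  | zero => exact leftHit_counit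
  | succ n ih => rw [convPow, ← leftHit_mul_leftHit, ih, pow_succ']

theorem toConv_includeLeft_mul_includeRight (a b : Module.End k H) :
    toConv ((Algebra.TensorProduct.includeLeft : H →ₐ[k] H ⊗[k] H).toLinearMap ∘ₗ a) *
        toConv ((Algebra.TensorProduct.includeRight : H →ₐ[k] H ⊗[k] H).toLinearMap ∘ₗ b) =
      toConv (TensorProduct.map a b ∘ₗ comul) := by
  ext h
  rw [(ℛ k h).convMul_apply]
  simp [← (ℛ k h).eq]

theorem comul_comp_rightHit (f : Module.Dual k H) :
    comul ∘ₗ rightHit f = TensorProduct.map (rightHit f) 1 ∘ₗ comul := by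
  apply toConv_injective
  rw [toConv_comp_rightHit, ← toConv_includeLeft_mul_includeRight, toConv_comp_rightHit, mul_assoc]
  congr 1
  simpa [Module.End.one_eq_id] using
    (toConv_includeLeft_mul_includeRight (k := k) (1 : Module.End k H) 1).symm

theorem comul_comp_leftHit (f : Module.Dual k H) :
    comul ∘ₗ leftHit f = TensorProduct.map 1 (leftHit f) ∘ₗ comul := by
  apply toConv_injective
  rw [toConv_comp_leftHit, ← toConv_includeLeft_mul_includeRight, toConv_comp_leftHit, ← mul_assoc]
  congr 1
  simpa [Module.End.one_eq_id] using
    (toConv_includeLeft_mul_includeRight (k := k) (1 : Module.End k H) 1).symm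

theorem rightHit_eq_toLinearMap (α : H →ₐ[k] k) : rightHit α.toLinearMap =
    ((Algebra.TensorProduct.lid k H).toAlgHom.comp
      ((Algebra.TensorProduct.map α (.id k H)).comp (Bialgebra.comulAlgHom k H))).toLinearMap := by
  ext h
  rw [rightHit_eq_sum _ (ℛ k h)]
  simp [← (ℛ k h).eq]

theorem leftHit_eq_toLinearMap (α : H →ₐ[k] k) : leftHit α.toLinearMap =
    ((Algebra.TensorProduct.rid k k H).toAlgHom.comp
      ((Algebra.TensorProduct.map (.id k H) α).comp (Bialgebra.comulAlgHom k H))).toLinearMap := by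
  ext h
  rw [leftHit_eq_sum _ (ℛ k h)]
  simp [← (ℛ k h).eq]

theorem rightHit_mul (α : H →ₐ[k] k) (x y : H) :
    rightHit α.toLinearMap (x * y) = rightHit α.toLinearMap x * rightHit α.toLinearMap y := by
  simp only [rightHit_eq_toLinearMap, AlgHom.toLinearMap_apply, map_mul]

theorem commute_rightHit_of_comp_eq (φ : H →ₗc[k] H) {f : Module.Dual k H}
    (hf : f ∘ₗ (φ : H →ₗ[k] H) = f) : Commute (φ : H →ₗ[k] H) (rightHit f) := by
  apply toConv_injective
  rw [Module.End.mul_eq_comp, toConv_comp_rightHit, Module.End.mul_eq_comp, rightHit]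
  refine Eq.trans ?_ congr(toConv $(LinearMap.convMul_comp_coalgHom_distrib _ _ φ)).symm
  simp [scalarConv, LinearMap.comp_assoc, hf]

theorem commute_leftHit_of_comp_eq (φ : H →ₗc[k] H) {f : Module.Dual k H}
    (hf : f ∘ₗ (φ : H →ₗ[k] H) = f) : Commute (φ : H →ₗ[k] H) (leftHit f) := by
  apply toConv_injective
  rw [Module.End.mul_eq_comp, toConv_comp_leftHit, Module.End.mul_eq_comp, leftHit]
  refine Eq.trans ?_ congr(toConv $(LinearMap.convMul_comp_coalgHom_distrib _ _ φ)).symm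
  simp [scalarConv, LinearMap.comp_assoc, hf]

end HitActions

section Galois

open Coalgebra WithConv

variable {k H : Type*} [CommSemiring k] [Semiring H]

/-- The `H`-linear extension `x ⊗ y ↦ (x ⊗ 1) φ(y)` of a linear map `φ : H → H ⊗ H`. -/
noncomputable def leftExtend [Algebra k H] (φ : H →ₗ[k] H ⊗[k] H) : Module.End k (H ⊗[k] H) :=
  LinearMap.mul' k (H ⊗[k] H) ∘ₗ
    TensorProduct.map (Algebra.TensorProduct.includeLeft : H →ₐ[k] H ⊗[k] H).toLinearMap φ

@[simp]
theorem leftExtend_tmul [Algebra k H] (φ : H →ₗ[k] H ⊗[k] H) (x y : H) :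
    leftExtend φ (x ⊗ₜ y) = (x ⊗ₜ 1) * φ y := rfl

variable [Bialgebra k H]

theorem leftExtend_mul_leftExtend_map_comp_comul (φ : H →ₗ[k] H ⊗[k] H) (f : Module.End k H) :
    leftExtend φ * leftExtend (TensorProduct.map f 1 ∘ₗ comul) =
      leftExtend (toConv ((Algebra.TensorProduct.includeLeft : H →ₐ[k] H ⊗[k] H).toLinearMap ∘ₗ f) *
        toConv φ).ofConv := by
  refine TensorProduct.ext' fun x y ↦ ?_
  have : (toConv ((Algebra.TensorProduct.includeLeft : H →ₐ[k] H ⊗[k] H).toLinearMap ∘ₗ f) *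
        toConv φ).ofConv y = _ := (ℛ k y).convMul_apply _ _
  rw [leftExtend_tmul, this]
  simp [← (ℛ k y).eq, Finset.mul_sum, ← mul_assoc]

variable (k H) in
/-- The Galois map `x ⊗ y ↦ (x ⊗ 1) Δ(y)`. -/
noncomputable def galoisMap : Module.End k (H ⊗[k] H) :=
  leftExtend comul

theorem galoisMap_tmul (x y : H) : galoisMap k H (x ⊗ₜ y) = (x ⊗ₜ[k] (1 : H)) * comul y := rfl

theorem commute_galoisMap_mulLeft (a : H) :
    Commute (galoisMap k H) (TensorProduct.map (LinearMap.mulLeft k a) 1) := by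
  refine TensorProduct.ext' fun x y ↦ ?_
  simp [galoisMap_tmul, ← (ℛ k y).eq, Finset.mul_sum, mul_assoc]

theorem commute_galoisMap_leftHit (f : Module.Dual k H) :
    Commute (galoisMap k H) (TensorProduct.map 1 (leftHit f)) := by
  refine TensorProduct.ext' fun x y ↦ ?_
  have hcomul : comul (leftHit f y) = TensorProduct.map 1 (leftHit f) (comul (R := k) y) :=
    congr($(comul_comp_leftHit f) y)
  simp [galoisMap_tmul, hcomul, ← (ℛ k y).eq, Finset.mul_sum]

theorem semiconjBy_galoisMap_mulRight {g : H} (hg : IsGroupLikeElem k g) :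
    SemiconjBy (galoisMap k H) (TensorProduct.map 1 (LinearMap.mulRight k g))
      (TensorProduct.map (LinearMap.mulRight k g) (LinearMap.mulRight k g)) := by
  refine TensorProduct.ext' fun x y ↦ ?_
  simp [galoisMap_tmul, hg.comul_eq_tmul_self, ← (ℛ k y).eq, Finset.mul_sum, Finset.sum_mul,
    mul_assoc]

theorem semiconjBy_galoisMap_rightHit (α : H →ₐ[k] k) :
    SemiconjBy (galoisMap k H)
      (TensorProduct.map (rightHit α.toLinearMap) (rightHit α.toLinearMap))
      (TensorProduct.map (rightHit α.toLinearMap) 1) := by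
  refine TensorProduct.ext' fun x y ↦ ?_
  have hcomul : comul (rightHit α.toLinearMap y) =
      TensorProduct.map (rightHit α.toLinearMap) 1 (comul (R := k) y) :=
    congr($(comul_comp_rightHit α.toLinearMap) y)
  simp [galoisMap_tmul, hcomul, ← (ℛ k y).eq, Finset.mul_sum, rightHit_mul]

variable (k H) in
/-- The monoid of operators `φ` on `H` such that `φ ⊗ φ` commutes with the Galois map; it contains
the bialgebra endomorphisms of `H`. -/
noncomputable def galoisCentralizer : Submonoid (Module.End k H) where
  carrier := {φ | Commute (galoisMap k H) (TensorProduct.map φ φ)}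
  one_mem' := by simp
  mul_mem' {φ ψ} hφ hψ := by
    simpa [TensorProduct.map_mul] using Commute.mul_right hφ hψ

theorem coe_mem_galoisCentralizer (φ : H →ₐc[k] H) : (φ : H →ₗ[k] H) ∈ galoisCentralizer k H := by
  refine TensorProduct.ext' fun x y ↦ ?_
  have hcomul : comul (φ y) = TensorProduct.map (φ : H →ₗ[k] H) φ (comul (R := k) y) :=
    (CoalgHomClass.map_comp_comul_apply φ y).symm
  simp [galoisMap_tmul, hcomul, ← (ℛ k y).eq, Finset.mul_sum]

end Galois

section GaloisHopf

open Coalgebra HopfAlgebra WithConv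

variable {k H : Type*} [CommSemiring k] [Semiring H] [HopfAlgebra k H]

section Antipode

variable {B : Type*} [Semiring B] [Algebra k B]

theorem toConv_comp_antipode_mul (φ : H →ₐ[k] B) :
    toConv (φ.toLinearMap ∘ₗ antipode k) * toConv φ.toLinearMap = 1 := by
  ext h
  rw [(ℛ k h).convMul_apply]
  simp [← map_mul, ← map_sum, sum_antipode_mul_eq_algebraMap_counit]

theorem toConv_mul_toConv_comp_antipode (φ : H →ₐ[k] B) :
    toConv φ.toLinearMap * toConv (φ.toLinearMap ∘ₗ antipode k) = 1 := by
  ext h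
  rw [(ℛ k h).convMul_apply]
  simp [← map_mul, ← map_sum, sum_mul_antipode_eq_algebraMap_counit]

end Antipode

theorem toConv_includeLeft_mul_includeRight_eq_comul :
    toConv (Algebra.TensorProduct.includeLeft : H →ₐ[k] H ⊗[k] H).toLinearMap *
      toConv (Algebra.TensorProduct.includeRight : H →ₐ[k] H ⊗[k] H).toLinearMap =
      toConv comul := by
  ext h
  rw [(ℛ k h).convMul_apply]
  simp [(ℛ k h).eq]

theorem comul_comp_antipode : comul ∘ₗ antipode k =
    TensorProduct.map (antipode k) (antipode k) ∘ₗ (TensorProduct.comm k H H).toLinearMap ∘ₗ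
      comul := by
  have hleft : toConv ((Algebra.TensorProduct.includeRight : H →ₐ[k] H ⊗[k] H).toLinearMap ∘ₗ
      antipode k) * toConv ((Algebra.TensorProduct.includeLeft : H →ₐ[k] H ⊗[k] H).toLinearMap ∘ₗ
      antipode k) * toConv comul = 1 := by
    rw [← toConv_includeLeft_mul_includeRight_eq_comul, mul_assoc,
      ← mul_assoc (toConv (_ ∘ₗ antipode k)) (toConv (AlgHom.toLinearMap _)),
      toConv_comp_antipode_mul, one_mul, toConv_comp_antipode_mul]
  apply toConv_injective
  rw [← left_inv_eq_right_inv hleft LinearMap.comul_right_inv]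
  ext h
  rw [(ℛ k h).convMul_apply]
  simp [← (ℛ k h).eq]

theorem isUnit_galoisMap : IsUnit (galoisMap k H) := by
  have hone : leftExtend (Algebra.TensorProduct.includeRight : H →ₐ[k] H ⊗[k] H).toLinearMap = 1 :=
    TensorProduct.ext' fun x y ↦ by simp
  have hgalois : galoisMap k H = leftExtend (TensorProduct.map 1 1 ∘ₗ comul) := by
    rw [galoisMap, TensorProduct.map_one, Module.End.one_eq_id, LinearMap.id_comp]
  rw [isUnit_iff_exists]
  refine ⟨leftExtend (TensorProduct.map (antipode k) 1 ∘ₗ comul), ?_, ?_⟩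
  · rw [galoisMap, leftExtend_mul_leftExtend_map_comp_comul,
      ← toConv_includeLeft_mul_includeRight_eq_comul, ← mul_assoc, toConv_comp_antipode_mul,
      one_mul, ofConv_toConv, hone]
  · rw [hgalois, leftExtend_mul_leftExtend_map_comp_comul, ← toConv_includeLeft_mul_includeRight,
      ← mul_assoc, Module.End.one_eq_id, LinearMap.comp_id, LinearMap.comp_id,
      toConv_mul_toConv_comp_antipode, one_mul, ofConv_toConv, hone]

theorem leftHit_mul_antipode_mul_rightHit (α : H →ₐ[k] k) :
    leftHit α.toLinearMap * antipode k * rightHit α.toLinearMap =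
      (antipode k : Module.End k H) := by
  have hright : toConv LinearMap.id *
      toConv ((leftHit α.toLinearMap * antipode k) ∘ₗ rightHit α.toLinearMap) = 1 := by
    rw [toConv_comp_rightHit, ← mul_assoc, ← toConv_comp_leftHit, LinearMap.id_comp,
      Module.End.mul_eq_comp, leftHit_eq_toLinearMap, toConv_mul_toConv_comp_antipode]
  exact toConv_injective (left_inv_eq_right_inv LinearMap.antipode_mul_id hright).symm

theorem rightHit_mul_antipode_mul_leftHit (α : H →ₐ[k] k) :
    rightHit α.toLinearMap * antipode k * leftHit α.toLinearMap =
      (antipode k : Module.End k H) := by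
  have hleft : toConv ((rightHit α.toLinearMap * antipode k) ∘ₗ leftHit α.toLinearMap) *
      toConv LinearMap.id = 1 := by
    rw [toConv_comp_leftHit, mul_assoc, ← toConv_comp_rightHit, LinearMap.id_comp,
      Module.End.mul_eq_comp, rightHit_eq_toLinearMap, toConv_comp_antipode_mul]
  exact toConv_injective (left_inv_eq_right_inv hleft LinearMap.id_mul_antipode)

theorem commute_antipode_sq_rightHit (α : H →ₐ[k] k) :
    Commute ((antipode k : Module.End k H) ^ 2) (rightHit α.toLinearMap) := by
  have hleft := leftHit_mul_antipode_mul_rightHit (k := k) α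
  have hright := rightHit_mul_antipode_mul_leftHit (k := k) α
  calc (antipode k : Module.End k H) ^ 2 * rightHit α.toLinearMap
      = rightHit α.toLinearMap * antipode k * leftHit α.toLinearMap * antipode k *
          rightHit α.toLinearMap := by rw [hright, sq]
    _ = rightHit α.toLinearMap * antipode k ^ 2 := by
        rw [mul_assoc, mul_assoc, ← mul_assoc (leftHit _), hleft, mul_assoc, sq]

theorem semiconjBy_antipode_leftHit (α : H →ₐ[k] k) {n : ℕ}
    (hα : rightHit α.toLinearMap ^ (n + 1) = 1) :
    SemiconjBy (antipode k : Module.End k H) (leftHit α.toLinearMap)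
      (rightHit α.toLinearMap ^ n) := by
  rw [SemiconjBy, ← rightHit_mul_antipode_mul_leftHit α, ← mul_assoc, ← mul_assoc, ← pow_succ, hα,
    one_mul, rightHit_mul_antipode_mul_leftHit]

variable (k H) in
/-- The square of the antipode, as a bialgebra endomorphism. -/
noncomputable def antipodeSq : H →ₐc[k] H :=
  .ofAlgHom (.ofLinearMap ((antipode k : Module.End k H) ^ 2) (by simp [sq, antipode_one])
      (by simp [sq, antipode_mul_antidistrib]))
    (by ext; simp [sq])
    (by
      have hcomul (x : H) : comul (antipode k x) = TensorProduct.map (antipode k) (antipode k)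
          (TensorProduct.comm k H H (comul x)) := congr($comul_comp_antipode x)
      ext x
      simp [sq, hcomul, ← (ℛ k x).eq])

theorem coe_antipodeSq : (antipodeSq k H : H →ₗ[k] H) = (antipode k : Module.End k H) ^ 2 := rfl

/-- The adjoint operator `x ↦ g x S(g)` of a group-like element `g`, as a bialgebra
endomorphism. -/
noncomputable def adjointHom {g : H} (hg : IsGroupLikeElem k g) : H →ₐc[k] H :=
  .ofAlgHom (.ofLinearMap (LinearMap.mulLeft k g * LinearMap.mulRight k (antipode k g))
      (by simp [hg])
      (fun x y ↦ by simp [mul_assoc, ← mul_assoc (antipode k g) g, hg]))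
    (by ext; simp [hg.counit_eq_one])
    (by
      ext x
      simp [hg.comul_eq_tmul_self, hg.antipode.comul_eq_tmul_self, ← (ℛ k x).eq,
        Finset.mul_sum, Finset.sum_mul])

theorem coe_adjointHom {g : H} (hg : IsGroupLikeElem k g) : (adjointHom hg : H →ₗ[k] H) =
    LinearMap.mulLeft k g * LinearMap.mulRight k (antipode k g) := rfl

theorem comp_adjointHom {g : H} (hg : IsGroupLikeElem k g) (α : H →ₐ[k] k) :
    α.toLinearMap ∘ₗ (adjointHom hg : H →ₗ[k] H) = α.toLinearMap := by
  have hα : α g * α (antipode k g) = 1 := by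
    rw [← map_mul, hg.mul_antipode_cancel, map_one]
  ext x
  simp [coe_adjointHom, mul_left_comm (α g), hα]

theorem antipode_apply_pow_eq_one {g : H} (hg : IsGroupLikeElem k g) {n : ℕ} (hn : g ^ n = 1) :
    antipode k g ^ n = 1 := by
  have hcomm : Commute (antipode k g) g :=
    hg.antipode_mul_cancel.trans hg.mul_antipode_cancel.symm
  simpa [hcomm.mul_pow, hn] using congr($hg.antipode_mul_cancel ^ n)

theorem adjointHom_pow_eq_one {g : H} (hg : IsGroupLikeElem k g) {n : ℕ} (hn : g ^ n = 1) :
    (adjointHom hg : H →ₗ[k] H) ^ n = 1 := by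
  rw [coe_adjointHom, (LinearMap.commute_mulLeft_right g _).mul_pow, LinearMap.pow_mulLeft,
    LinearMap.pow_mulRight, hn, antipode_apply_pow_eq_one hg hn]
  ext x
  simp

theorem commute_adjointHom_rightHit {g : H} (hg : IsGroupLikeElem k g) (α : H →ₐ[k] k) :
    Commute (adjointHom hg : H →ₗ[k] H) (rightHit α.toLinearMap) :=
  commute_rightHit_of_comp_eq (adjointHom hg).toCoalgHom (comp_adjointHom hg α)

theorem commute_adjointHom_leftHit {g : H} (hg : IsGroupLikeElem k g) (α : H →ₐ[k] k) :
    Commute (adjointHom hg : H →ₗ[k] H) (leftHit α.toLinearMap) :=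
  commute_leftHit_of_comp_eq (adjointHom hg).toCoalgHom (comp_adjointHom hg α)

theorem commute_antipode_adjointHom {g : H} (hg : IsGroupLikeElem k g) :
    Commute (antipode k : Module.End k H) (adjointHom hg : H →ₗ[k] H) := by
  ext x
  simp [coe_adjointHom, antipode_mul_antidistrib, hg, mul_assoc]

theorem commute_antipode_sq_mulRight {g : H} (hg : IsGroupLikeElem k g) :
    Commute ((antipode k : Module.End k H) ^ 2) (LinearMap.mulRight k g) := by
  ext x
  simp [sq, antipode_mul_antidistrib, hg]

theorem semiconjBy_antipode_mulRight {g : H} (hg : IsGroupLikeElem k g) :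
    SemiconjBy (antipode k : Module.End k H) (LinearMap.mulRight k (antipode k g))
      (LinearMap.mulLeft k g) := by
  ext x
  simp [antipode_mul_antidistrib, hg]

theorem antipode_pow_mem_galoisCentralizer (n : ℕ) :
    (antipode k : Module.End k H) ^ (2 * n) ∈ galoisCentralizer k H := by
  rw [pow_mul, ← coe_antipodeSq]
  exact pow_mem (coe_mem_galoisCentralizer _) n

end GaloisHopf

section Integrals

open Coalgebra HopfAlgebra WithConv

variable {k H : Type*} [Field k] [Ring H] [HopfAlgebra k H] {l : Module.Dual k H} {g L : H}

theorem IsGroupLike.isGroupLikeElem (hg : IsGroupLike k g) : IsGroupLikeElem k g where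
  counit_eq_one := by
    have hcounit : counit (R := k) g • g = g := by
      simpa [hg.2] using congr(TensorProduct.lid k H $(rTensor_counit_comul (R := k) g))
    exact smul_left_injective k hg.1 (by simpa using hcounit)
  comul_eq_tmul_self := hg.2

theorem IsDistinguishedGroupLike.isGroupLikeElem (hg : IsDistinguishedGroupLike k g) :
    IsGroupLikeElem k g :=
  IsGroupLike.isGroupLikeElem hg.1

theorem rightHit_eq_smul_one (hl : IsRightIntegralDual k l) (h : H) : rightHit l h = l h • 1 := by
  rw [← sub_eq_zero, ← Module.forall_dual_apply_eq_zero_iff k]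
  intro f
  have : f (rightHit l h) = f 1 * l h := congr($((comp_rightHit l f).trans (hl f)) h)
  simp [this, mul_comm]

theorem leftHit_eq_smul (hlg : ∀ f, conv f l = f g • l) (h : H) : leftHit l h = l h • g := by
  rw [← sub_eq_zero, ← Module.forall_dual_apply_eq_zero_iff k]
  intro f
  have : f (leftHit l h) = f g * l h := congr($((comp_leftHit l f).trans (hlg f)) h)
  simp [this, mul_comm]

theorem rightHit_comp_mulRight (hl : IsRightIntegralDual k l) (a b : H) :
    rightHit (l ∘ₗ LinearMap.mulRight k b) a =
      antipode k (rightHit (l ∘ₗ LinearMap.mulLeft k a) b) := by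
  let P : Module.End k H := ∑ i ∈ (ℛ k a).index,
    (l ∘ₗ LinearMap.mulLeft k ((ℛ k a).left i)).smulRight ((ℛ k a).right i)
  have hP : toConv P * toConv LinearMap.id = scalarConv H (l ∘ₗ LinearMap.mulLeft k a) := by
    ext b
    have hb := rightHit_eq_smul_one hl (a * b)
    rw [rightHit_eq_sum _ ((ℛ k a).mul (ℛ k b))] at hb
    rw [(ℛ k b).convMul_apply]
    simpa [P, scalarConv, Finset.sum_mul, Finset.sum_product_right, Algebra.algebraMap_eq_smul_one]
      using hb
  have hPS : P = antipode k ∘ₗ rightHit (l ∘ₗ LinearMap.mulLeft k a) := by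
    apply toConv_injective
    rw [toConv_comp_rightHit, ← hP, mul_assoc, LinearMap.id_mul_antipode, mul_one]
  refine Eq.trans ?_ congr($hPS b)
  simp [P, rightHit_eq_sum _ (ℛ k a)]

theorem leftHit_comp_mulLeft (hlg : ∀ f, conv f l = f g • l) (a b : H) :
    leftHit (l ∘ₗ LinearMap.mulLeft k a) b =
      antipode k (leftHit (l ∘ₗ LinearMap.mulRight k b) a) * g := by
  let Q : Module.End k H := ∑ i ∈ (ℛ k b).index,
    (l ∘ₗ LinearMap.mulRight k ((ℛ k b).right i)).smulRight ((ℛ k b).left i)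
  have hQ : toConv LinearMap.id * toConv Q =
      toConv ((l ∘ₗ LinearMap.mulRight k b).smulRight g) := by
    ext a
    have ha := leftHit_eq_smul hlg (a * b)
    rw [leftHit_eq_sum _ ((ℛ k a).mul (ℛ k b))] at ha
    rw [(ℛ k a).convMul_apply]
    simpa [Q, Finset.mul_sum, Finset.sum_product] using ha
  have hQS : toConv Q =
      toConv (LinearMap.mulRight k g ∘ₗ antipode k ∘ₗ leftHit (l ∘ₗ LinearMap.mulRight k b)) := by
    rw [← one_mul (toConv Q), ← LinearMap.antipode_mul_id, mul_assoc, hQ]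
    ext a
    rw [(ℛ k a).convMul_apply]
    simp [leftHit_eq_sum _ (ℛ k a)]
  refine Eq.trans ?_ congr($hQS a)
  simp [Q, leftHit_eq_sum _ (ℛ k b)]

theorem comp_mulLeft_leftHit_eq_zero (hl : IsRightIntegralDual k l) {a : H}
    (ha : l ∘ₗ LinearMap.mulLeft k a = 0) (f : Module.Dual k H) :
    l ∘ₗ LinearMap.mulLeft k (leftHit f a) = 0 := by
  ext b
  have hzero : rightHit (l ∘ₗ LinearMap.mulRight k b) a = 0 := by
    rw [rightHit_comp_mulRight hl, ha]
    simp [rightHit, scalarConv]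
  calc l (leftHit f a * b) = conv (l ∘ₗ LinearMap.mulRight k b) f a :=
        congr($(comp_leftHit f (l ∘ₗ LinearMap.mulRight k b)) a)
    _ = f (rightHit (l ∘ₗ LinearMap.mulRight k b) a) := congr($(comp_rightHit _ f) a).symm
    _ = 0 := by rw [hzero, map_zero]

section FiniteDimensional

variable [FiniteDimensional k H]

theorem counit_eq_zero_of_comp_mulLeft_eq_zero (hl : IsRightIntegralDual k l) (hl0 : l ≠ 0) {a : H}
    (ha : l ∘ₗ LinearMap.mulLeft k a = 0) : counit (R := k) a = 0 := by
  obtain ⟨c, hc⟩ := DFunLike.ne_iff.1 hl0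
  let P : Module.End k H := ∑ i ∈ (ℛ k a).index,
    (l ∘ₗ LinearMap.mulLeft k ((ℛ k a).left i)).smulRight (antipode k ((ℛ k a).right i) * c)
  have hP : P = 0 := by
    ext b
    have hPb : P b = antipode k (rightHit (l ∘ₗ LinearMap.mulRight k b) a) * c := by
      simp [P, rightHit_eq_sum _ (ℛ k a), Finset.sum_mul]
    rw [hPb, rightHit_comp_mulRight hl, ha]
    simp [rightHit, scalarConv]
  have htrace : LinearMap.trace k H P = counit a * l c := by
    simp only [P, map_sum, LinearMap.trace_smulRight, LinearMap.comp_apply,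
      LinearMap.mulLeft_apply, ← mul_assoc]
    rw [← map_sum, ← Finset.sum_mul, sum_mul_antipode_eq_algebraMap_counit, ← Algebra.smul_def,
      map_smul, smul_eq_mul]
  rw [hP, map_zero] at htrace
  exact (mul_eq_zero.1 htrace.symm).resolve_right hc

theorem eq_zero_of_comp_mulLeft_eq_zero (hl : IsRightIntegralDual k l) (hl0 : l ≠ 0) {a : H}
    (ha : l ∘ₗ LinearMap.mulLeft k a = 0) : a = 0 := by
  rw [← Module.forall_dual_apply_eq_zero_iff k]
  intro f
  have hf : counit (leftHit f a) = f a := by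
    rw [← LinearMap.comp_apply, comp_leftHit, ← comp_rightHit, rightHit_counit]
    rfl
  rw [← hf]
  exact counit_eq_zero_of_comp_mulLeft_eq_zero hl hl0 (comp_mulLeft_leftHit_eq_zero hl ha f)

theorem exists_comp_mulLeft_eq (hl : IsRightIntegralDual k l) (hl0 : l ≠ 0) (f : Module.Dual k H) :
    ∃ a, l ∘ₗ LinearMap.mulLeft k a = f := by
  let Φ : H →ₗ[k] Module.Dual k H := (LinearMap.mul k H).compr₂ l
  have hinj : Function.Injective Φ :=
    (injective_iff_map_eq_zero Φ).2 fun a ha ↦ eq_zero_of_comp_mulLeft_eq_zero hl hl0 ha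
  exact (LinearMap.injective_iff_surjective_of_finrank_eq_finrank
    Subspace.dual_finrank_eq.symm).1 hinj f

theorem apply_leftIntegral_ne_zero (hl : IsRightIntegralDual k l) (hl0 : l ≠ 0)
    (hL : IsLeftIntegral k L) (hL0 : L ≠ 0) : l L ≠ 0 := by
  intro hlL
  refine hL0 ((Module.forall_dual_apply_eq_zero_iff k L).1 fun f ↦ ?_)
  obtain ⟨a, rfl⟩ := exists_comp_mulLeft_eq hl hl0 f
  simp [hL a, hlL]

end FiniteDimensional

theorem comp_mulRight_eq_smul_counit (l : Module.Dual k H) (hL : IsLeftIntegral k L) :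
    l ∘ₗ LinearMap.mulRight k L = l L • counit := by
  ext x
  simp [hL x, mul_comm]

theorem comp_mulLeft_eq_smul (l : Module.Dual k H) {α : H →ₐ[k] k} (hLα : ∀ a, L * a = α a • L) :
    l ∘ₗ LinearMap.mulLeft k L = l L • α.toLinearMap := by
  ext x
  simp [hLα x, mul_comm]

theorem apply_smul_eq_antipode_rightHit (hl : IsRightIntegralDual k l) (hL : IsLeftIntegral k L)
    (a : H) : l L • a = antipode k (rightHit (l ∘ₗ LinearMap.mulLeft k a) L) := by
  rw [← rightHit_comp_mulRight hl, comp_mulRight_eq_smul_counit l hL, rightHit_smul,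
    rightHit_counit]
  rfl

theorem apply_smul_antipode_mul_eq (hlg : ∀ f, conv f l = f g • l) (hL : IsLeftIntegral k L)
    (a : H) : l L • (antipode k a * g) = leftHit (l ∘ₗ LinearMap.mulLeft k a) L := by
  rw [leftHit_comp_mulLeft hlg, comp_mulRight_eq_smul_counit l hL, leftHit_smul, leftHit_counit]
  simp

theorem apply_smul_antipode_rightHit_eq (hl : IsRightIntegralDual k l) {α : H →ₐ[k] k}
    (hLα : ∀ a, L * a = α a • L) (b : H) :
    l L • antipode k (rightHit α.toLinearMap b) = rightHit (l ∘ₗ LinearMap.mulRight k b) L := by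
  rw [rightHit_comp_mulRight hl, comp_mulLeft_eq_smul l hLα, rightHit_smul]
  simp

theorem apply_smul_leftHit_eq (hlg : ∀ f, conv f l = f g • l) {α : H →ₐ[k] k}
    (hLα : ∀ a, L * a = α a • L) (b : H) :
    l L • leftHit α.toLinearMap b =
      antipode k (leftHit (l ∘ₗ LinearMap.mulRight k b) L) * g := by
  rw [← leftHit_comp_mulLeft hlg, comp_mulLeft_eq_smul l hLα, leftHit_smul]
  rfl

theorem apply_mul_trace_sq_eq [FiniteDimensional k H] (hl : IsRightIntegralDual k l)
    (hL : IsLeftIntegral k L) {M : Module.End k H} (hSM : antipode k * M = 1)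
    (hMS : M * antipode k = 1) : l L * LinearMap.trace k H (M ^ 2) = counit (R := k) L * l 1 := by
  have hSM' (x : H) : antipode k (M x) = x := congr($hSM x)
  have hMS' (x : H) : M (antipode k x) = x := congr($hMS x)
  have hexpand : l L • M ^ 2 = ∑ i ∈ (ℛ k L).index,
      (l ∘ₗ LinearMap.mulRight k ((ℛ k L).left i)).smulRight (M ((ℛ k L).right i)) := by
    ext a
    rw [LinearMap.smul_apply, ← map_smul, apply_smul_eq_antipode_rightHit hl hL,
      rightHit_eq_sum _ (ℛ k L)]
    simp [sq, hMS']
  have hanti (i) : M ((ℛ k L).right i) * (ℛ k L).left i =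
      M (antipode k ((ℛ k L).left i) * (ℛ k L).right i) := by
    rw [← hMS' (M _ * _), antipode_mul_antidistrib, hSM']
  have hM1 : M 1 = 1 := by simpa using hMS' 1
  rw [← smul_eq_mul, ← map_smul, hexpand]
  simp only [map_sum, LinearMap.trace_smulRight, LinearMap.comp_apply, LinearMap.mulRight_apply,
    hanti]
  rw [← map_sum, ← map_sum, sum_antipode_mul_eq_algebraMap_counit, Algebra.algebraMap_eq_smul_one,
    map_smul, map_smul, hM1, smul_eq_mul]

theorem apply_one_eq_zero_of_ne_one (hl : IsRightIntegralDual k l) (hlg : ∀ f, conv f l = f g • l)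
    (hg : g ≠ 1) : l 1 = 0 := by
  have hg1 : l 1 • (1 : H) = l 1 • g := by
    rw [← rightHit_eq_smul_one hl, ← leftHit_eq_smul hlg]
    simp [rightHit, leftHit, scalarConv, Algebra.TensorProduct.one_def]
  by_contra h
  exact hg (smul_right_injective H h hg1).symm

theorem counit_eq_zero_of_ne_counit (hL0 : L ≠ 0) (hL : IsLeftIntegral k L) {α : H →ₐ[k] k}
    (hLα : ∀ a, L * a = α a • L) (hα : α.toLinearMap ≠ counit) : counit (R := k) L = 0 := by
  obtain ⟨a, ha⟩ := DFunLike.ne_iff.1 hα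
  have hLaL : (counit (R := k) L * α a) • L = (counit (R := k) L * counit a) • L := by
    calc (counit (R := k) L * α a) • L = L * a * L := by
          rw [hLα, smul_mul_assoc, hL, smul_smul, mul_comm]
      _ = (counit (R := k) L * counit a) • L := by
          rw [mul_assoc, hL, mul_smul_comm, hL, smul_smul, mul_comm]
  exact (mul_eq_mul_left_iff.1 (smul_left_injective k hL0 hLaL)).resolve_left ha

theorem radford_antipode_pow_four [FiniteDimensional k H] (hg : IsDistinguishedGroupLike k g)
    {α : H →ₐ[k] k} (hα : IsDistinguishedGroupLikeDual k α) :
    antipode k ^ 4 * rightHit α.toLinearMap =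
      (adjointHom hg.isGroupLikeElem : H →ₗ[k] H) * leftHit α.toLinearMap := by
  have ⟨_, l, hl0, hl, hlg⟩ := hg
  obtain ⟨L, hL0, hL, hLα⟩ := hα
  have hlL := apply_leftIntegral_ne_zero hl hl0 hL hL0
  ext b
  obtain ⟨t, ht⟩ := exists_comp_mulLeft_eq hl hl0 (l ∘ₗ LinearMap.mulRight k b)
  have ht_eq : t = antipode k (antipode k (rightHit α.toLinearMap b)) := by
    refine smul_right_injective H hlL ?_
    dsimp only
    rw [apply_smul_eq_antipode_rightHit hl hL, ht, ← apply_smul_antipode_rightHit_eq hl hLα,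
      map_smul]
  have hleft : leftHit α.toLinearMap b = antipode k (antipode k t * g) * g := by
    refine smul_right_injective H hlL ?_
    dsimp only
    rw [apply_smul_leftHit_eq hlg hLα, ← ht, ← apply_smul_antipode_mul_eq hlg hL, map_smul,
      smul_mul_assoc]
  simp [hleft, ht_eq, coe_adjointHom, antipode_mul_antidistrib, pow_succ, mul_assoc,
    hg.isGroupLikeElem,
    ← mul_assoc g (antipode k g)]

end Integrals

section Trace

variable {k : Type*} [Field k]

section SemiconjBy

variable {U : Type*} [AddCommGroup U] [Module k U]

theorem trace_eq_of_semiconjBy {f a b : Module.End k U} (hf : IsUnit f) (h : SemiconjBy f a b) :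
    LinearMap.trace k U a = LinearMap.trace k U b := by
  obtain ⟨u, rfl⟩ := hf
  rw [← u.inv_mul_cancel_left a, h.eq, LinearMap.trace_mul_comm, mul_assoc, Units.mul_inv, mul_one]

theorem trace_mul_trace_eq_of_semiconjBy [FiniteDimensional k U] {f : Module.End k (U ⊗[k] U)}
    {a b c d : Module.End k U} (hf : IsUnit f)
    (h : SemiconjBy f (TensorProduct.map a b) (TensorProduct.map c d)) :
    LinearMap.trace k U a * LinearMap.trace k U b =
      LinearMap.trace k U c * LinearMap.trace k U d := by
  simpa [LinearMap.trace_tensorProduct'] using trace_eq_of_semiconjBy hf h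

end SemiconjBy

open Coalgebra HopfAlgebra

variable {H : Type*} [Ring H] [HopfAlgebra k H] [FiniteDimensional k H] {φ : Module.End k H}

theorem trace_mul_trace_mul_eq_of_mem_galoisCentralizer {a b c d : Module.End k H}
    (hφ : φ ∈ galoisCentralizer k H)
    (h : SemiconjBy (galoisMap k H) (TensorProduct.map a b) (TensorProduct.map c d)) :
    LinearMap.trace k H (φ * a) * LinearMap.trace k H (φ * b) =
      LinearMap.trace k H (φ * c) * LinearMap.trace k H (φ * d) := by
  refine trace_mul_trace_eq_of_semiconjBy isUnit_galoisMap ?_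
  rw [TensorProduct.map_mul, TensorProduct.map_mul]
  exact SemiconjBy.mul_right hφ h

theorem trace_mul_mulRight_pow_eq_zero_or (hφ : φ ∈ galoisCentralizer k H) {g : H}
    (hg : IsGroupLikeElem k g) (i : ℕ) :
    LinearMap.trace k H (φ * LinearMap.mulRight k g ^ i) = 0 ∨
      LinearMap.trace k H (φ * LinearMap.mulRight k g ^ i) = LinearMap.trace k H φ := by
  have hsemiconj := (semiconjBy_galoisMap_mulRight hg).pow_right i
  rw [TensorProduct.map_pow, TensorProduct.map_pow, one_pow] at hsemiconj
  have htrace := trace_mul_trace_mul_eq_of_mem_galoisCentralizer hφ hsemiconj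
  rw [mul_one] at htrace
  exact (mul_eq_mul_right_iff.1 htrace.symm).symm

theorem trace_mul_rightHit_pow_eq_zero_or (hφ : φ ∈ galoisCentralizer k H) (α : H →ₐ[k] k)
    (i : ℕ) : LinearMap.trace k H (φ * rightHit α.toLinearMap ^ i) = 0 ∨
      LinearMap.trace k H (φ * rightHit α.toLinearMap ^ i) = LinearMap.trace k H φ := by
  have hsemiconj := (semiconjBy_galoisMap_rightHit α).pow_right i
  rw [TensorProduct.map_pow, TensorProduct.map_pow, one_pow] at hsemiconj
  have htrace := trace_mul_trace_mul_eq_of_mem_galoisCentralizer hφ hsemiconj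
  rw [mul_one] at htrace
  exact (mul_eq_mul_left_iff.1 htrace).symm

theorem trace_mul_rightHit_pow_mul_leftHit_eq (hφ : φ ∈ galoisCentralizer k H) (α : H →ₐ[k] k)
    (f : Module.Dual k H) {i : ℕ} (hi : LinearMap.trace k H (φ * rightHit α.toLinearMap ^ i) ≠ 0) :
    LinearMap.trace k H (φ * (rightHit α.toLinearMap ^ i * leftHit f)) =
      LinearMap.trace k H (φ * leftHit f) := by
  have hsemiconj := ((semiconjBy_galoisMap_rightHit α).pow_right i).mul_right
    (commute_galoisMap_leftHit f)
  rw [TensorProduct.map_pow, TensorProduct.map_pow, one_pow, ← TensorProduct.map_mul,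
    ← TensorProduct.map_mul, mul_one, one_mul] at hsemiconj
  exact mul_left_cancel₀ hi (trace_mul_trace_mul_eq_of_mem_galoisCentralizer hφ hsemiconj)

theorem trace_mul_adjointHom_eq (hφ : φ ∈ galoisCentralizer k H) (hS : IsUnit (antipode k (A := H)))
    (hφS : Commute (antipode k) φ) {g : H} (hg : IsGroupLikeElem k g)
    (hR : LinearMap.trace k H (φ * LinearMap.mulRight k (antipode k g)) ≠ 0) :
    LinearMap.trace k H (φ * (adjointHom hg : H →ₗ[k] H)) = LinearMap.trace k H φ := by
  have hsemiconj := (commute_galoisMap_mulLeft (k := k) g).semiconjBy.mul_right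
    (semiconjBy_galoisMap_mulRight hg.antipode)
  rw [← TensorProduct.map_mul, ← TensorProduct.map_mul, mul_one, one_mul, ← coe_adjointHom hg]
    at hsemiconj
  rw [← mul_right_cancel₀ hR (trace_mul_trace_mul_eq_of_mem_galoisCentralizer hφ hsemiconj),
    ← trace_eq_of_semiconjBy hS (SemiconjBy.mul_right hφS (semiconjBy_antipode_mulRight hg))]
  simpa [hR] using trace_mul_mulRight_pow_eq_zero_or hφ hg.antipode 1

section Distinguished

variable {g : H} {α : H →ₐ[k] k} {p : ℕ}

theorem antipode_pow_four_mul_eq_one (hg : IsDistinguishedGroupLike k g)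
    (hα : IsDistinguishedGroupLikeDual k α) {n : ℕ} (hgn : g ^ n = 1)
    (hαn : convPow α.toLinearMap n = counit) : (antipode k : Module.End k H) ^ (4 * n) = 1 := by
  have hradford := congr($(radford_antipode_pow_four hg hα) ^ n)
  have hSA : Commute ((antipode k : Module.End k H) ^ 4) (rightHit α.toLinearMap) := by
    simpa [← pow_mul] using (commute_antipode_sq_rightHit α).pow_left 2
  rw [hSA.mul_pow, (commute_adjointHom_leftHit hg.isGroupLikeElem α).mul_pow, ← rightHit_convPow,
    ← leftHit_convPow, hαn, rightHit_counit, leftHit_counit, mul_one, mul_one,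
    ← pow_mul] at hradford
  exact hradford.trans (adjointHom_pow_eq_one hg.isGroupLikeElem hgn)

theorem trace_antipode_pow_eq_zero (hg : IsDistinguishedGroupLike k g)
    (hα : IsDistinguishedGroupLikeDual k α) (hne : g ≠ 1 ∨ α.toLinearMap ≠ counit) {n : ℕ}
    (hS : (antipode k : Module.End k H) ^ (n + 2) = 1) :
    LinearMap.trace k H (antipode k ^ n) = 0 := by
  obtain ⟨-, l, hl0, hl, hlg⟩ := hg
  obtain ⟨L, hL0, hL, hLα⟩ := hα
  have htrace := apply_mul_trace_sq_eq hl hL (M := antipode k ^ (n + 1))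
    (by rw [← pow_succ', hS]) (by rw [← pow_succ, hS])
  have hzero : counit (R := k) L * l 1 = 0 := mul_eq_zero.2 <| hne.symm.imp
    (counit_eq_zero_of_ne_counit hL0 hL hLα) (apply_one_eq_zero_of_ne_one hl hlg)
  rw [hzero, ← pow_mul, show (n + 1) * 2 = n + (n + 2) by ring, pow_add, hS, mul_one] at htrace
  exact (mul_eq_zero.1 htrace).resolve_left (apply_leftIntegral_ne_zero hl hl0 hL hL0)

theorem trace_antipode_pow_mul_adjointHom_mul_rightHit_pow_eq_zero
    (hg : IsDistinguishedGroupLike k g) (hα : IsDistinguishedGroupLikeDual k α) {m n : ℕ}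
    (hA : rightHit α.toLinearMap ^ (n + 1) = 1) (hS : IsUnit (antipode k : Module.End k H))
    (htrace : LinearMap.trace k H (antipode k ^ (2 * m + 4)) = 0) :
    LinearMap.trace k H (antipode k ^ (2 * m) *
      ((adjointHom hg.isGroupLikeElem : H →ₗ[k] H) * rightHit α.toLinearMap ^ n)) = 0 := by
  by_contra hne
  have hφ := mul_mem (antipode_pow_mem_galoisCentralizer (k := k) (H := H) m)
    (coe_mem_galoisCentralizer (adjointHom hg.isGroupLikeElem))
  have hSφ := (Commute.self_pow (antipode k) (2 * m)).mul_right
    (commute_antipode_adjointHom hg.isGroupLikeElem)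
  have hradford : (adjointHom hg.isGroupLikeElem : H →ₗ[k] H) *
      (rightHit α.toLinearMap ^ n * leftHit α.toLinearMap) = (antipode k : Module.End k H) ^ 4 := by
    rw [((commute_rightHit_leftHit _ _).pow_left n).eq, ← mul_assoc,
      ← radford_antipode_pow_four hg hα, mul_assoc, ← pow_succ', hA, mul_one]
  rw [← mul_assoc] at hne
  refine hne ?_
  rw [← trace_eq_of_semiconjBy hS (SemiconjBy.mul_right hSφ (semiconjBy_antipode_leftHit α hA)),
    ← trace_mul_rightHit_pow_mul_leftHit_eq hφ α _ hne, mul_assoc, hradford, ← pow_add, htrace]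

variable [CharZero k]

theorem exists_trace_antipode_pow_eq_sq_mul_of_trace_mul_eq_zero (hp : p.Prime) (hpodd : Odd p)
    (hS : (antipode k : Module.End k H) ^ (4 * p) = 1)
    (hS0 : LinearMap.trace k H (antipode k ^ (4 * p - 2)) = 0) {Q : Module.End k H}
    (hQ : Q ^ p = 1) (hSQ : Commute (antipode k ^ 2) Q)
    (hQtrace : ∀ φ ∈ galoisCentralizer k H, ∀ b, LinearMap.trace k H (φ * Q ^ b) = 0 ∨
      LinearMap.trace k H (φ * Q ^ b) = LinearMap.trace k H φ)
    (hTQ : LinearMap.trace k H (antipode k ^ (2 * p) * Q) = 0) :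
    ∃ d : ℤ, LinearMap.trace k H (antipode k ^ (2 * p)) = (p : k) ^ 2 * d := by
  have hpow (n : ℕ) : Commute ((antipode k : Module.End k H) ^ (2 * n)) Q := by
    rw [pow_mul]
    exact hSQ.pow_left n
  have hTC : (antipode k : Module.End k H) ^ (2 * p) * antipode k ^ (2 * (p - 1)) =
      antipode k ^ (2 * (p + (p - 1))) := by
    rw [← pow_add, mul_add]
  refine exists_trace_eq_sq_mul_of_trace_mul_eq_zero (P := antipode k ^ (2 * (p - 1))) hp hpodd
    ?_ ?_ hQ (Commute.pow_pow_self _ _ _) (hpow p) (hpow _) hTQ fun b ↦ ?_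
  · rw [← pow_mul, ← hS]
    congr 1
    ring
  · obtain ⟨m, rfl⟩ := hpodd
    rw [← pow_mul, show 2 * (2 * m + 1 - 1) * (2 * m + 1) = 4 * (2 * m + 1) * m by
      rw [Nat.add_sub_cancel]; ring, pow_mul, hS, one_pow]
  · have htrace := hQtrace _ (antipode_pow_mem_galoisCentralizer (p + (p - 1))) b
    rw [← mul_assoc, hTC]
    rw [show 4 * p - 2 = 2 * (p + (p - 1)) by have := hp.pos; omega] at hS0
    rwa [hS0, or_self] at htrace

theorem exists_trace_antipode_pow_eq_sq_mul_of_trace_mul_ne_zero (hp : p.Prime) (hpodd : Odd p)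
    (hg : IsDistinguishedGroupLike k g) (hgp : g ^ p = 1)
    (hα : IsDistinguishedGroupLikeDual k α) (hAp : rightHit α.toLinearMap ^ p = 1)
    (hS : (antipode k : Module.End k H) ^ (4 * p) = 1)
    (hS0 : LinearMap.trace k H (antipode k ^ (4 * p - 2)) = 0)
    (hTR : LinearMap.trace k H (antipode k ^ (2 * p) * LinearMap.mulRight k (antipode k g)) ≠ 0)
    (hTA : LinearMap.trace k H (antipode k ^ (2 * p) * rightHit α.toLinearMap) ≠ 0) :
    ∃ d : ℤ, LinearMap.trace k H (antipode k ^ (2 * p)) = (p : k) ^ 2 * d := by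
  have hT := antipode_pow_mem_galoisCentralizer (k := k) (H := H) p
  have hS_unit : IsUnit (antipode k : Module.End k H) :=
    IsUnit.of_pow_eq_one hS (by simp [hp.ne_zero])
  have hD := commute_antipode_adjointHom hg.isGroupLikeElem
  have hTDx := trace_mul_adjointHom_eq hT hS_unit (.self_pow _ _) hg.isGroupLikeElem hTR
  refine exists_trace_eq_sq_mul_of_trace_mul_eq (P := (adjointHom hg.isGroupLikeElem : H →ₗ[k] H))
    (Q := rightHit α.toLinearMap) hp hpodd ?_ (adjointHom_pow_eq_one _ hgp) hAp (hD.pow_left _) ?_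
    (commute_adjointHom_rightHit _ α) hTDx ?_ (fun b ↦ ?_) ?_
  · rw [← pow_mul, ← hS]
    congr 1
    ring
  · rw [pow_mul]
    exact (commute_antipode_sq_rightHit α).pow_left p
  · simpa [hTA] using trace_mul_rightHit_pow_eq_zero_or hT α 1
  · rw [← mul_assoc, ← hTDx]
    exact trace_mul_rightHit_pow_eq_zero_or (mul_mem hT (coe_mem_galoisCentralizer _)) α b
  · refine trace_antipode_pow_mul_adjointHom_mul_rightHit_pow_eq_zero hg hα ?_ hS_unit
      (trace_pow_two_mul_add_four_eq_zero hp.one_lt hpodd hS hS0)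
    rwa [Nat.sub_add_cancel hp.one_le]

end Distinguished

end Trace

theorem stmt6_general {k : Type*} [Field k] [CharZero k] {p : ℕ} (hp : p.Prime) (hpodd : Odd p)
    {H : Type*} [Ring H] [HopfAlgebra k H] [FiniteDimensional k H]
    {g : H} (hg : IsDistinguishedGroupLike k g) (hgp : g ^ p = 1)
    {α : H →ₐ[k] k} (hα : IsDistinguishedGroupLikeDual k α)
    (hαp : convPow α.toLinearMap p = (Coalgebra.counit : Module.Dual k H))
    (hne : g ≠ 1 ∨ α.toLinearMap ≠ (Coalgebra.counit : Module.Dual k H)) :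
    ∃ d : ℤ,
      LinearMap.trace k H ((HopfAlgebra.antipode (R := k) (A := H) : Module.End k H) ^ (2 * p))
        = (p : k) ^ 2 * (d : k) := by
  have hS := antipode_pow_four_mul_eq_one hg hα hgp hαp
  have hS0 := trace_antipode_pow_eq_zero hg hα hne (n := 4 * p - 2)
    (by rw [Nat.sub_add_cancel (by have := hp.two_le; omega), hS])
  have hAp : rightHit α.toLinearMap ^ p = 1 := by rw [← rightHit_convPow, hαp, rightHit_counit]
  by_cases hTA : LinearMap.trace k H
      (HopfAlgebra.antipode k ^ (2 * p) * rightHit α.toLinearMap) = 0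
  · exact exists_trace_antipode_pow_eq_sq_mul_of_trace_mul_eq_zero hp hpodd hS hS0 hAp
      (commute_antipode_sq_rightHit α) (fun φ hφ ↦ trace_mul_rightHit_pow_eq_zero_or hφ α) hTA
  have hSg := hg.isGroupLikeElem.antipode
  by_cases hTR : LinearMap.trace k H (HopfAlgebra.antipode k ^ (2 * p) *
      LinearMap.mulRight k (HopfAlgebra.antipode k g)) = 0
  · refine exists_trace_antipode_pow_eq_sq_mul_of_trace_mul_eq_zero hp hpodd hS hS0 ?_
      (commute_antipode_sq_mulRight hSg)
      (fun φ hφ ↦ trace_mul_mulRight_pow_eq_zero_or hφ hSg) hTR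
    rw [LinearMap.pow_mulRight, antipode_apply_pow_eq_one hg.isGroupLikeElem hgp,
      LinearMap.mulRight_one, Module.End.one_eq_id]
  exact exists_trace_antipode_pow_eq_sq_mul_of_trace_mul_ne_zero hp hpodd hg hgp hα hAp hS hS0
    hTR hTA

/-- Lemma 5.3. Let `p` be an odd prime and `H` a Hopf algebra over an
algebraically closed field of characteristic `0` such that the distinguished group-like
element `g` of `H` and the distinguished group-like element `α` of `H*` both have order `p`
(the order of `α` is taken with respect to the convolution product, whose unit is the counit).
Then `Tr(S^{2p}) = p² d` for some integer `d`. -/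
theorem stmt6 (k : Type*) [Field k] [IsAlgClosed k] [CharZero k]
    (p : ℕ) (hp : p.Prime) (hpodd : Odd p)
    (H : Type*) [Ring H] [HopfAlgebra k H] [FiniteDimensional k H]
    (g : H) (hg : IsDistinguishedGroupLike k g) (hgord : orderOf g = p)
    (α : H →ₐ[k] k) (hα : IsDistinguishedGroupLikeDual k α)
    (hαord : sInf {m : ℕ | 0 < m ∧
      convPow (α.toLinearMap : Module.Dual k H) m = (Coalgebra.counit : H →ₗ[k] k)} = p) :
    ∃ d : ℤ,
      LinearMap.trace k H ((HopfAlgebra.antipode (R := k) (A := H) : Module.End k H) ^ (2 * p))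
        = (p : k) ^ 2 * (d : k) := by
  have hαp := Nat.sInf_mem (Nat.nonempty_of_pos_sInf (hαord ▸ hp.pos))
  rw [hαord] at hαp
  exact stmt6_general hp hpodd hg (hgord ▸ pow_orderOf_eq_one g) hα hαp.2
    (.inl fun hg1 ↦ hp.ne_one (hgord ▸ orderOf_eq_one_iff.2 hg1))
end

section
/- Let p be an odd prime, H a Hopf algebra over k of index p, and ω ∈ k a primitive p-th root of unity. Then for each j ∈ Z_p there exists an integer d_j such that dim H^ω_{0,i,j} − dim H^ω_{1,i,j} = d_j for every i ∈ Z_p (that is, this difference of dimensions is independent of i). -/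
open scoped TensorProduct

/-! For a right integral `l` of `H*` and `x, y ∈ H`, the endomorphism `b ↦ S²(l(x b₁) b₂) y` of `H`
has trace `ε(x) l(y)`. Hence `(a, b) ↦ l(ab)` is nondegenerate, so that `l(L b) = ε(b)` for some
`L ∈ H`, and `tr(r(a) S²) = ε(L) l(a)`, where `r(a)` is right multiplication by `a`. If this is
nonzero for a group-like `a`, then `a = 1 = g` and `S⁴ = 1`, so the index is `1`. For an index
`p ≠ 1` all the traces `tr(r(g)^m S²)` therefore vanish, and Vandermonde inversion over the
eigenvalues `ω^j` of `r(g)` yields `∑ (-1)^a ω^i dim H^ω_{a,i,j} = 0` for each `j`. As `p` is prime,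
a `ℚ`-linear relation among the powers of `ω` has constant coefficients. -/

section Slices

open Coalgebra

variable {R : Type*} [CommSemiring R]

section Module

variable {M N : Type*} [AddCommMonoid M] [AddCommMonoid N] [Module R M] [Module R N]

/-- The left slice map `x ⊗ y ↦ f x • y`, contracting the left tensor factor against `f`. -/
noncomputable def sliceLeft (f : Module.Dual R M) : M ⊗[R] N →ₗ[R] N :=
  TensorProduct.lid R N ∘ₗ f.rTensor N

/-- The right slice map `x ⊗ y ↦ f y • x`, contracting the right tensor factor against `f`. -/
noncomputable def sliceRight (f : Module.Dual R N) : M ⊗[R] N →ₗ[R] M :=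
  TensorProduct.rid R M ∘ₗ f.lTensor M

@[simp]
lemma sliceLeft_tmul (f : Module.Dual R M) (x : M) (y : N) :
    sliceLeft f (x ⊗ₜ[R] y) = f x • y := by
  simp [sliceLeft]

@[simp]
lemma sliceRight_tmul (f : Module.Dual R N) (x : M) (y : N) :
    sliceRight f (x ⊗ₜ[R] y) = f y • x := by
  simp [sliceRight]

@[simp]
lemma sliceLeft_zero (t : M ⊗[R] N) : sliceLeft (0 : Module.Dual R M) t = 0 := by
  simp [sliceLeft]

lemma apply_sliceLeft_eq_apply_sliceRight (f : Module.Dual R M) (h : Module.Dual R N)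
    (t : M ⊗[R] N) : h (sliceLeft f t) = f (sliceRight h t) := by
  induction t with
  | zero => simp
  | tmul x y => simp [mul_comm]
  | add s t hs ht => simp only [map_add, hs, ht]

end Module

section Coalgebra

variable {C : Type*} [AddCommMonoid C] [Module R C] [Coalgebra R C]

@[simp]
lemma sliceLeft_counit_comul (x : C) : sliceLeft (counit : Module.Dual R C) (comul x) = x := by
  simp [sliceLeft]

@[simp]
lemma sliceRight_counit_comul (x : C) : sliceRight (counit : Module.Dual R C) (comul x) = x := by
  simp [sliceRight]

lemma apply_sliceLeft_comul (l f : Module.Dual R C) (x : C) :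
    f (sliceLeft l (comul x)) = conv l f x := by
  rw [conv, LinearMap.comp_apply, LinearMap.comp_apply]
  induction comul (R := R) x with
  | zero => simp
  | tmul x y => simp
  | add s t hs ht => simp only [map_add, hs, ht]

lemma apply_sliceRight_comul (l f : Module.Dual R C) (x : C) :
    f (sliceRight l (comul x)) = conv f l x := by
  rw [← apply_sliceLeft_eq_apply_sliceRight, apply_sliceLeft_comul]

end Coalgebra

section Algebra

variable {A : Type*} [Semiring A] [Algebra R A]

/-- The bilinear form `(a, b) ↦ l (a * b)` on an algebra attached to a linear functional `l`. -/
def mulForm (l : Module.Dual R A) : LinearMap.BilinForm R A :=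
  (LinearMap.mul R A).compr₂ l

@[simp]
lemma mulForm_apply (l : Module.Dual R A) (a b : A) : mulForm l a b = l (a * b) :=
  rfl

variable {B : Type*} [Semiring B] [Algebra R B]

lemma sliceLeft_mul_one_tmul (f : Module.Dual R A) (t : A ⊗[R] B) (b : B) :
    sliceLeft f (t * (1 ⊗ₜ b)) = sliceLeft f t * b := by
  induction t with
  | zero => simp
  | tmul x y => simp
  | add s t hs ht => simp [add_mul, hs, ht]

lemma sliceRight_tmul_one_mul (f : Module.Dual R B) (t : A ⊗[R] B) (a : A) :
    sliceRight f ((a ⊗ₜ 1) * t) = a * sliceRight f t := by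
  induction t with
  | zero => simp
  | tmul x y => simp
  | add s t hs ht => simp [mul_add, hs, ht]

lemma sliceLeft_mul_tmul_one (f : Module.Dual R A) (t : A ⊗[R] B) (a : A) :
    sliceLeft f (t * (a ⊗ₜ 1)) = sliceLeft ((mulForm f).flip a) t := by
  induction t with
  | zero => simp
  | tmul x y => simp
  | add s t hs ht => simp [add_mul, hs, ht]

lemma sliceRight_one_tmul_mul (f : Module.Dual R B) (t : A ⊗[R] B) (b : B) :
    sliceRight f ((1 ⊗ₜ b) * t) = sliceRight (mulForm f b) t := by
  induction t with
  | zero => simp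
  | tmul x y => simp
  | add s t hs ht => simp [mul_add, hs, ht]

end Algebra

end Slices

section IntegralsOfDual

open Coalgebra HopfAlgebra

section Semiring

variable {R H : Type*} [CommSemiring R] [Semiring H] [HopfAlgebra R H]

lemma sum_comul_mul_one_tmul_antipode {ι : Type*} {b : H} (r : Repr R b ι) :
    ∑ i ∈ r.index, comul (R := R) (r.left i) * (1 ⊗ₜ antipode R (r.right i)) = b ⊗ₜ[R] 1 := by
  have hassoc (t : H ⊗[R] H) (y : H) : (LinearMap.mul' R H ∘ₗ (antipode R).lTensor H).lTensor H
      (TensorProduct.assoc R H H H (t ⊗ₜ y)) = t * (1 ⊗ₜ antipode R y) := by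
    induction t with
    | zero => simp
    | tmul x z => simp
    | add s t hs ht => simp only [TensorProduct.add_tmul, map_add, hs, ht, add_mul]
  have h := congr((LinearMap.mul' R H ∘ₗ (antipode R).lTensor H).lTensor H
    $(coassoc_apply (R := R) b))
  rw [← r.eq] at h
  simp only [map_sum, LinearMap.rTensor_tmul, LinearMap.lTensor_tmul, hassoc,
    LinearMap.comp_apply, mul_antipode_lTensor_comul_apply] at h
  rw [h]
  simp only [Algebra.algebraMap_eq_smul_one, ← TensorProduct.smul_tmul, ← TensorProduct.sum_tmul]
  congr 1
  simpa [← r.eq] using sliceRight_counit_comul (R := R) b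

lemma sum_antipode_tmul_one_mul_comul {ι : Type*} {a : H} (r : Repr R a ι) :
    ∑ i ∈ r.index, (antipode R (r.left i) ⊗ₜ 1) * comul (R := R) (r.right i) = 1 ⊗ₜ[R] a := by
  have hassoc (t : H ⊗[R] H) (y : H) : (LinearMap.mul' R H ∘ₗ (antipode R).rTensor H).rTensor H
      ((TensorProduct.assoc R H H H).symm (y ⊗ₜ t)) = (antipode R y ⊗ₜ 1) * t := by
    induction t with
    | zero => simp
    | tmul x z => simp
    | add s t hs ht => simp only [TensorProduct.tmul_add, map_add, hs, ht, mul_add]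
  have h := congr((LinearMap.mul' R H ∘ₗ (antipode R).rTensor H).rTensor H
    $(coassoc_symm_apply (R := R) a))
  rw [← r.eq] at h
  simp only [map_sum, LinearMap.rTensor_tmul, LinearMap.lTensor_tmul, hassoc,
    LinearMap.comp_apply, mul_antipode_rTensor_comul_apply] at h
  rw [h]
  simp only [Algebra.algebraMap_eq_smul_one, TensorProduct.smul_tmul, ← TensorProduct.tmul_sum]
  congr 1
  simpa [← r.eq] using sliceLeft_counit_comul (R := R) a

/-- `l ∈ H*` is a left integral of `H*`: `β * l = β(1) • l` for the convolution product. -/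
def IsLeftIntegralDual (R : Type*) {H : Type*} [CommSemiring R] [Semiring H] [HopfAlgebra R H]
    (l : Module.Dual R H) : Prop :=
  ∀ f : Module.Dual R H, conv f l = f 1 • l

end Semiring

section Coalgebra

variable {R C : Type*} [CommRing R] [AddCommGroup C] [Module R C] [Coalgebra R C]
  [Module.Projective R C] {l : Module.Dual R C}

lemma sliceLeft_comul_eq_smul {c : C} (hl : ∀ f : Module.Dual R C, conv l f = f c • l) (x : C) :
    sliceLeft l (comul (R := R) x) = l x • c := by
  refine sub_eq_zero.mp ((Module.forall_dual_apply_eq_zero_iff R _).mp fun f => ?_)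
  rw [map_sub, apply_sliceLeft_comul, hl f]
  simp [mul_comm]

lemma sliceRight_comul_eq_smul {c : C} (hl : ∀ f : Module.Dual R C, conv f l = f c • l) (x : C) :
    sliceRight l (comul (R := R) x) = l x • c := by
  refine sub_eq_zero.mp ((Module.forall_dual_apply_eq_zero_iff R _).mp fun f => ?_)
  rw [map_sub, apply_sliceRight_comul, hl f]
  simp [mul_comm]

end Coalgebra

section Projective

variable {R H : Type*} [CommRing R] [Ring H] [HopfAlgebra R H] [Module.Projective R H]
  {l : Module.Dual R H}

lemma IsRightIntegralDual.sliceLeft_flip_mulForm_comul (hl : IsRightIntegralDual R l) (a b : H) :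
    sliceLeft ((mulForm l).flip b) (comul (R := R) a) =
      antipode R (sliceLeft (mulForm l a) (comul (R := R) b)) := by
  rw [← sliceLeft_mul_tmul_one, ← sum_comul_mul_one_tmul_antipode (ℛ R b), Finset.mul_sum, map_sum]
  conv_rhs => rw [← (ℛ R b).eq]
  simp [← mul_assoc, ← Bialgebra.comul_mul, sliceLeft_mul_one_tmul, sliceLeft_comul_eq_smul hl]

lemma IsLeftIntegralDual.antipode_sliceRight_flip_mulForm_comul (hl : IsLeftIntegralDual R l)
    (a b : H) :
    antipode R (sliceRight ((mulForm l).flip b) (comul (R := R) a)) =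
      sliceRight (mulForm l a) (comul (R := R) b) := by
  rw [← sliceRight_one_tmul_mul, ← sum_antipode_tmul_one_mul_comul (ℛ R a), Finset.sum_mul, map_sum]
  conv_lhs => rw [← (ℛ R a).eq]
  simp [mul_assoc, ← Bialgebra.comul_mul, sliceRight_tmul_one_mul, sliceRight_comul_eq_smul hl]

lemma IsRightIntegralDual.antipode_antipode_of_mulForm_eq_flip (hl : IsRightIntegralDual R l)
    {L : H} (hL : mulForm l L = counit) (hL' : (mulForm l).flip L = counit) {a b : H}
    (hab : mulForm l a = (mulForm l).flip b) : antipode R (antipode R b) = a :=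
  calc antipode R (antipode R b)
      = antipode R (antipode R (sliceLeft (mulForm l L) (comul (R := R) b))) := by
        rw [hL, sliceLeft_counit_comul]
    _ = antipode R (sliceLeft (mulForm l a) (comul (R := R) L)) := by
        rw [← hl.sliceLeft_flip_mulForm_comul, hab]
    _ = sliceLeft ((mulForm l).flip L) (comul (R := R) a) :=
        (hl.sliceLeft_flip_mulForm_comul a L).symm
    _ = a := by rw [hL', sliceLeft_counit_comul]

lemma IsLeftIntegralDual.antipode_antipode_of_mulForm_eq_flip (hl : IsLeftIntegralDual R l)
    {L : H} (hL : mulForm l L = counit) (hL' : (mulForm l).flip L = counit) {a b : H}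
    (hab : mulForm l a = (mulForm l).flip b) : antipode R (antipode R a) = b :=
  calc antipode R (antipode R a)
      = antipode R (antipode R (sliceRight ((mulForm l).flip L) (comul (R := R) a))) := by
        rw [hL', sliceRight_counit_comul]
    _ = antipode R (sliceRight ((mulForm l).flip b) (comul (R := R) L)) := by
        rw [hl.antipode_sliceRight_flip_mulForm_comul, hab]
    _ = sliceRight (mulForm l L) (comul (R := R) b) :=
        hl.antipode_sliceRight_flip_mulForm_comul L b
    _ = b := by rw [hL, sliceRight_counit_comul]

end Projective

section Free

open LinearMap

variable {R H : Type*} [CommRing R] [Ring H] [HopfAlgebra R H] [Module.Free R H]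
  [Module.Finite R H] {l : Module.Dual R H}

lemma IsRightIntegralDual.trace_mulRight_antipode_antipode_sliceLeft (hl : IsRightIntegralDual R l)
    (x y : H) :
    trace R H (mulRight R y ∘ₗ antipode R ∘ₗ antipode R ∘ₗ sliceLeft (mulForm l x) ∘ₗ comul) =
      counit (R := R) x * l y := by
  have hsum : mulRight R y ∘ₗ antipode R ∘ₗ antipode R ∘ₗ sliceLeft (mulForm l x) ∘ₗ comul =
      ∑ i ∈ (ℛ R x).index,
        (mulForm l ((ℛ R x).left i)).smulRight (antipode R ((ℛ R x).right i) * y) := by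
    ext b
    simp only [comp_apply, ← hl.sliceLeft_flip_mulForm_comul]
    conv_lhs => rw [← (ℛ R x).eq]
    simp
  rw [hsum]
  simp only [map_sum, trace_smulRight, mulForm_apply, ← mul_assoc]
  rw [← map_sum, ← Finset.sum_mul, sum_mul_antipode_eq_smul]
  simp

lemma IsRightIntegralDual.trace_mulRight_mul_antipode_sq (hl : IsRightIntegralDual R l) {L : H}
    (hL : mulForm l L = counit) (y : H) :
    trace R H (mulRight R y * antipode R ^ 2) = counit (R := R) L * l y := by
  rw [← hl.trace_mulRight_antipode_antipode_sliceLeft, hL]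
  congr 1
  ext b
  simp [pow_two]

end Free

end IntegralsOfDual

section GroupLike

open Coalgebra

variable {k C : Type*} [Field k] [AddCommGroup C] [Module k C] [Coalgebra k C]

lemma IsGroupLike.isGroupLikeElem_s7 {a : C} (ha : IsGroupLike k a) : IsGroupLikeElem k a := by
  refine ⟨?_, ha.2⟩
  have h := sliceLeft_counit_comul (R := k) a
  rw [ha.2, sliceLeft_tmul] at h
  exact smul_left_injective k ha.1 (by simpa using h)

variable {l : Module.Dual k C}

lemma eq_of_isGroupLikeElem_of_forall_conv_right_eq_smul {a c : C} (ha : IsGroupLikeElem k a)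
    (hl : ∀ f : Module.Dual k C, conv l f = f c • l) (hla : l a ≠ 0) : a = c := by
  have h := sliceLeft_comul_eq_smul hl a
  rw [ha.comul_eq_tmul_self, sliceLeft_tmul] at h
  exact smul_right_injective C hla h

lemma eq_of_isGroupLikeElem_of_forall_conv_left_eq_smul {a c : C} (ha : IsGroupLikeElem k a)
    (hl : ∀ f : Module.Dual k C, conv f l = f c • l) (hla : l a ≠ 0) : a = c := by
  have h := sliceRight_comul_eq_smul hl a
  rw [ha.comul_eq_tmul_self, sliceRight_tmul] at h
  exact smul_right_injective C hla h

end GroupLike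

section Integrals

open Coalgebra HopfAlgebra

section Semiring

variable {R H : Type*} [CommSemiring R] [Semiring H] [HopfAlgebra R H] {l : Module.Dual R H} {L : H}

lemma isRightIntegral_of_mulForm_eq_counit (hl : Function.Injective (mulForm l))
    (hL : mulForm l L = counit) : IsRightIntegral R L := fun a => hl <| by
  ext b
  have hLb (b : H) : l (L * b) = counit (R := R) b := congr($hL b)
  simp [mul_assoc, hLb]

lemma flip_mulForm_eq_counit [IsCancelMulZero R] (hl : Function.Injective (mulForm l))
    (hL : mulForm l L = counit) (hε : counit (R := R) L ≠ 0) : (mulForm l).flip L = counit := by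
  ext a
  have hLb (b : H) : l (L * b) = counit (R := R) b := congr($hL b)
  have haL : a * L = l (a * L) • L := hl <| by
    ext b
    rw [map_smul, LinearMap.smul_apply, mulForm_apply, mulForm_apply, hLb, mul_assoc,
      isRightIntegral_of_mulForm_eq_counit hl hL b, mul_smul_comm, map_smul, smul_eq_mul,
      smul_eq_mul, mul_comm]
  have h := congr(counit (R := R) $haL)
  rw [Bialgebra.counit_mul, map_smul, smul_eq_mul] at h
  exact (mul_right_cancel₀ hε h).symm

end Semiring

section Domain

variable {R H : Type*} [CommRing R] [IsDomain R] [Ring H] [HopfAlgebra R H] [Module.Free R H]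
  [Module.Finite R H] {l : Module.Dual R H}

lemma IsRightIntegralDual.counit_eq_zero_of_mulForm_eq_zero (hl : IsRightIntegralDual R l)
    (hl0 : l ≠ 0) {x : H} (hx : mulForm l x = 0) : counit (R := R) x = 0 := by
  obtain ⟨y, hy⟩ := DFunLike.ne_iff.mp hl0
  have hzero : sliceLeft (mulForm l x) = (0 : H ⊗[R] H →ₗ[R] H) := by ext; simp [hx]
  have h := hl.trace_mulRight_antipode_antipode_sliceLeft x y
  rw [hzero, LinearMap.zero_comp, LinearMap.comp_zero, LinearMap.comp_zero, LinearMap.comp_zero,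
    map_zero] at h
  exact (mul_eq_zero.mp h.symm).resolve_right hy

-- The left radical is stable under all slices `(id ⊗ f) ∘ Δ`, and `ε` vanishes on it.
lemma IsRightIntegralDual.injective_mulForm (hl : IsRightIntegralDual R l) (hl0 : l ≠ 0) :
    Function.Injective (mulForm l) := by
  refine (injective_iff_map_eq_zero _).mpr fun x hx => ?_
  refine (Module.forall_dual_apply_eq_zero_iff R x).mp fun f => ?_
  have hslice : mulForm l (sliceRight f (comul (R := R) x)) = 0 := by
    ext b
    have hflip := apply_sliceLeft_eq_apply_sliceRight ((mulForm l).flip b) f (comul (R := R) x)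
    rw [hl.sliceLeft_flip_mulForm_comul, hx, sliceLeft_zero, map_zero, map_zero] at hflip
    exact hflip.symm
  have h := hl.counit_eq_zero_of_mulForm_eq_zero hl0 hslice
  rwa [← apply_sliceLeft_eq_apply_sliceRight, sliceLeft_counit_comul] at h

end Domain

section Field

variable {k H : Type*} [Field k] [Ring H] [HopfAlgebra k H] [FiniteDimensional k H]
  {l : Module.Dual k H}

lemma IsRightIntegralDual.nondegenerate_mulForm (hl : IsRightIntegralDual k l) (hl0 : l ≠ 0) :
    (mulForm l).Nondegenerate :=
  LinearMap.BilinForm.nondegenerate_iff_ker_eq_bot.mpr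
    (LinearMap.ker_eq_bot.mpr (hl.injective_mulForm hl0))

lemma IsRightIntegralDual.exists_mulForm_eq (hl : IsRightIntegralDual k l) (hl0 : l ≠ 0)
    (f : Module.Dual k H) : ∃ a, mulForm l a = f :=
  ((mulForm l).toDual (hl.nondegenerate_mulForm hl0)).surjective f

lemma IsRightIntegralDual.exists_flip_mulForm_eq (hl : IsRightIntegralDual k l) (hl0 : l ≠ 0)
    (f : Module.Dual k H) : ∃ a, (mulForm l).flip a = f :=
  ((mulForm l).flip.toDual (hl.nondegenerate_mulForm hl0).flip).surjective f

lemma IsRightIntegralDual.antipode_pow_four_eq_one (hl : IsRightIntegralDual k l)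
    (hl' : IsLeftIntegralDual k l) (hl0 : l ≠ 0) {L : H} (hL : mulForm l L = counit)
    (hε : counit (R := k) L ≠ 0) : (antipode k : Module.End k H) ^ 4 = 1 := by
  have hL' := flip_mulForm_eq_counit (hl.injective_mulForm hl0) hL hε
  ext a
  obtain ⟨b, hab⟩ := hl.exists_flip_mulForm_eq hl0 (mulForm l a)
  have ha := hl.antipode_antipode_of_mulForm_eq_flip hL hL' hab.symm
  have hb := hl'.antipode_antipode_of_mulForm_eq_flip hL hL' hab.symm
  simp [pow_succ, ha, hb]

end Field

end Integrals

section DistinguishedGroupLike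

open HopfAlgebra

section Semiring

variable {R H : Type*} [CommSemiring R] [Semiring H] [HopfAlgebra R H] {g : H}

lemma commute_mulRight_antipode_sq (hg : IsGroupLikeElem R g) :
    Commute (LinearMap.mulRight R g) ((antipode R : Module.End R H) ^ 2) := by
  ext x
  simp [pow_two, antipode_mul_antidistrib, hg.antipode_antipode]

lemma IsHopfIndex.eq_one {n : ℕ} (hidx : IsHopfIndex R g n) (hg : g = 1)
    (hS : (antipode R : Module.End R H) ^ 4 = 1) : n = 1 :=
  le_antisymm (hidx.2.2.2 1 one_pos (by simpa using hS) (by simpa using hg)) hidx.1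

end Semiring

section Field

variable {k H : Type*} [Field k] [Ring H] [HopfAlgebra k H] [FiniteDimensional k H] {g : H}

lemma IsDistinguishedGroupLike.eq_one_and_antipode_pow_four_eq_one
    (hg : IsDistinguishedGroupLike k g) {a : H} (ha : IsGroupLikeElem k a)
    (htr : LinearMap.trace k H (LinearMap.mulRight k a * antipode k ^ 2) ≠ 0) :
    g = 1 ∧ (antipode k : Module.End k H) ^ 4 = 1 := by
  obtain ⟨-, l, hl0, hl, hlg⟩ := hg
  obtain ⟨L, hL⟩ := hl.exists_mulForm_eq hl0 Coalgebra.counit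
  rw [hl.trace_mulRight_mul_antipode_sq hL] at htr
  have hla := right_ne_zero_of_mul htr
  obtain rfl : a = 1 := eq_of_isGroupLikeElem_of_forall_conv_right_eq_smul ha hl hla
  obtain rfl : 1 = g := eq_of_isGroupLikeElem_of_forall_conv_left_eq_smul ha hlg hla
  exact ⟨rfl, hl.antipode_pow_four_eq_one hlg hl0 hL (left_ne_zero_of_mul htr)⟩

lemma IsDistinguishedGroupLike.trace_mulRight_pow_mul_antipode_sq_eq_zero
    (hg : IsDistinguishedGroupLike k g) {n : ℕ} (hidx : IsHopfIndex k g n) (hn : n ≠ 1) (m : ℕ) :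
    LinearMap.trace k H (LinearMap.mulRight k g ^ m * antipode k ^ 2) = 0 := by
  rw [LinearMap.pow_mulRight]
  by_contra htr
  obtain ⟨hg1, hS⟩ := hg.eq_one_and_antipode_pow_four_eq_one hg.1.isGroupLikeElem_s7.pow htr
  exact hn (hidx.eq_one hg1 hS)

end Field

end DistinguishedGroupLike

section RootsOfUnity

lemma eq_of_sum_smul_pow_eq_zero {k : Type*} [Field k] [CharZero k] {p : ℕ} [Fact p.Prime]
    {ω : k} (hω : IsPrimitiveRoot ω p) {x : ZMod p → ℚ} (hx : ∑ i, x i • ω ^ i.val = 0)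
    (i j : ZMod p) : x i = x j := by
  have hp : p.Prime := Fact.out
  have hli : LinearIndependent ℚ fun i : Fin (p - 1) => ω ^ (i : ℕ) := by
    have h := linearIndependent_pow (K := ℚ) ω
    rwa [← Polynomial.cyclotomic_eq_minpoly_rat hω hp.pos, Polynomial.natDegree_cyclotomic,
      Nat.totient_prime hp] at h
  obtain ⟨q, rfl⟩ : ∃ q, p = q + 1 := ⟨p - 1, (Nat.succ_pred hp.ne_zero).symm⟩
  have hgeom : ∑ i : Fin (q + 1), ω ^ (i : ℕ) = 0 := by
    rw [Fin.sum_univ_eq_sum_range (fun i => ω ^ i), hω.geom_sum_eq_zero hp.one_lt]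
  have hsum : ∑ i : Fin (q + 1), (x i - x (Fin.last q)) • ω ^ (i : ℕ) = 0 := by
    simp only [sub_smul, Finset.sum_sub_distrib, ← Finset.smul_sum, hgeom, smul_zero, sub_zero]
    exact hx
  rw [Fin.sum_univ_castSucc, sub_self, zero_smul, add_zero] at hsum
  have hconst (i : Fin (q + 1)) : x i = x (Fin.last q) := by
    induction i using Fin.lastCases with
    | last => rfl
    | cast i => exact sub_eq_zero.mp (Fintype.linearIndependent_iff.mp hli _ hsum i)
  exact (hconst i).trans (hconst j).symm

lemma injective_pow_val_mul_pow_val {R : Type*} [CommRing R] [IsDomain R] {m n : ℕ} [NeZero m]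
    [NeZero n] (hmn : m.Coprime n) {ζ ω : R} (hζ : IsPrimitiveRoot ζ m)
    (hω : IsPrimitiveRoot ω n) :
    Function.Injective fun i : ZMod m × ZMod n => ζ ^ i.1.val * ω ^ i.2.val := by
  rintro ⟨a, i⟩ ⟨b, j⟩ h
  have hζ0 := hζ.ne_zero (NeZero.ne m)
  have ha : (ζ ^ n) ^ a.val = (ζ ^ n) ^ b.val := by
    have hn := congr($h ^ n)
    simp only [mul_pow, ← pow_mul, mul_comm _ n] at hn
    simpa [pow_mul, hω.pow_eq_one] using hn
  obtain rfl : a = b := ZMod.val_injective m <|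
    (hζ.pow_of_coprime n hmn.symm).pow_inj a.val_lt b.val_lt ha
  have hi : ω ^ i.val = ω ^ j.val := mul_left_cancel₀ (pow_ne_zero a.val hζ0) h
  rw [ZMod.val_injective n (hω.pow_inj i.val_lt j.val_lt hi)]

end RootsOfUnity

section Eigenspaces

open Module Polynomial

section CommRing

variable {R M : Type*} [CommRing R] [AddCommGroup M] [Module R M]

lemma pow_apply_of_mem_eigenspace {T : End R M} {c : R} {v : M} (hv : v ∈ T.eigenspace c)
    (m : ℕ) : (T ^ m) v = c ^ m • v := by
  rcases eq_or_ne v 0 with rfl | hv0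
  · simp
  · exact (show T.HasEigenvector c v from ⟨hv, hv0⟩).pow_apply m

/-- The restriction of `F` to the eigenspace of `G` for `c`, where `F` commutes with `G`. -/
def restrictEigenspace {F G : End R M} (h : Commute G F) (c : R) : End R (G.eigenspace c) :=
  F.restrict fun _ hv => End.mapsTo_genEigenspace_of_comm h c 1 hv

@[simp]
lemma coe_restrictEigenspace_apply {F G : End R M} (h : Commute G F) (c : R)
    (v : G.eigenspace c) : (restrictEigenspace h c v : M) = F v :=
  rfl

lemma coe_restrictEigenspace_pow_apply {F G : End R M} (h : Commute G F) (c : R) (n : ℕ)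
    (v : G.eigenspace c) : ((restrictEigenspace h c ^ n) v : M) = (F ^ n) v := by
  rw [restrictEigenspace, End.pow_restrict, LinearMap.coe_restrict_apply]

lemma finrank_eigenspace_restrictEigenspace {F G : End R M} (h : Commute G F) (μ c : R) :
    finrank R ((restrictEigenspace h c).eigenspace μ) =
      finrank R ↥(F.eigenspace μ ⊓ G.eigenspace c) := by
  rw [inf_comm, ← Submodule.finrank_map_subtype_eq]
  exact congrArg (fun W : Submodule R M => finrank R W) (Submodule.inf_genEigenspace F _ _).symm

end CommRing

section Field

variable {ι κ k V : Type*} [Field k] [AddCommGroup V] [Module k V]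

lemma iSup_eigenspace_eq_top_of_aeval_nodal_eq_zero [Fintype ι] [Nonempty ι] {T : End k V}
    {χ : ι → k} (hχ : Function.Injective χ)
    (hT : aeval T (Lagrange.nodal Finset.univ χ) = 0) : ⨆ i, T.eigenspace (χ i) = ⊤ := by
  classical
  refine eq_top_iff.mpr fun v _ => ?_
  have hv : v = ∑ i, aeval T (Lagrange.basis Finset.univ χ i) v := by
    rw [← LinearMap.sum_apply, ← map_sum, Lagrange.sum_basis hχ.injOn Finset.univ_nonempty,
      map_one, End.one_apply]
  rw [hv]
  refine Submodule.sum_mem_iSup fun i => End.mem_eigenspace_iff.mpr ?_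
  have hi : (X - C (χ i)) * Lagrange.basis Finset.univ χ i =
      C (Lagrange.nodalWeight Finset.univ χ i) * Lagrange.nodal Finset.univ χ := by
    rw [Lagrange.basis_eq_prod_sub_inv_mul_nodal_div (Finset.mem_univ i),
      ← Lagrange.nodal_erase_eq_nodal_div (Finset.mem_univ i),
      Lagrange.nodal_eq_mul_nodal_erase (Finset.mem_univ i)]
    ring
  have h := congr(aeval T $hi v)
  simpa [hT, sub_eq_zero] using h

lemma isInternal_eigenspace_of_pow_card_eq_one [Fintype ι] [Nonempty ι] [DecidableEq ι]
    {T : End k V} (hT : T ^ Fintype.card ι = 1) {χ : ι → k} (hχ : Function.Injective χ)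
    (hχ1 : ∀ i, χ i ^ Fintype.card ι = 1) :
    DirectSum.IsInternal fun i => T.eigenspace (χ i) := by
  have hnodal : Lagrange.nodal Finset.univ χ = X ^ Fintype.card ι - 1 := by
    refine eq_of_degree_sub_lt_of_eval_index_eq Finset.univ hχ.injOn ?_ fun i _ => ?_
    · rw [← Lagrange.degree_nodal (v := χ)]
      refine degree_sub_lt_left ?_ Lagrange.nodal_ne_zero ?_
      · simpa using (degree_X_pow_sub_C Fintype.card_pos (1 : k)).symm
      · rw [Lagrange.nodal_monic, ← C_1, leadingCoeff_X_pow_sub_C Fintype.card_pos]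
    · simp [Lagrange.eval_nodal_at_node, hχ1]
  exact DirectSum.isInternal_submodule_of_iSupIndep_of_iSup_eq_top
    (T.eigenspaces_iSupIndep.comp hχ)
    (iSup_eigenspace_eq_top_of_aeval_nodal_eq_zero hχ (by simp [hnodal, hT]))

variable [FiniteDimensional k V]

lemma trace_pow_mul_eq_sum_pow_mul_trace_restrict [Fintype ι] [DecidableEq ι] {F G : End k V}
    (h : Commute G F) {χ : ι → k} (hG : DirectSum.IsInternal fun i => G.eigenspace (χ i)) (m : ℕ) :
    LinearMap.trace k V (G ^ m * F) =
      ∑ i, χ i ^ m * LinearMap.trace k _ (restrictEigenspace h (χ i)) := by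
  have hcomm : Commute G (G ^ m * F) := ((Commute.refl G).pow_right m).mul_right h
  rw [LinearMap.trace_eq_sum_trace_restrict hG
    fun i _ hv => End.mapsTo_genEigenspace_of_comm hcomm (χ i) 1 hv]
  refine Finset.sum_congr rfl fun i _ => ?_
  have hi : restrictEigenspace hcomm (χ i) = χ i ^ m • restrictEigenspace h (χ i) := by
    ext v
    have hFv : F v ∈ G.eigenspace (χ i) := (restrictEigenspace h (χ i) v).2
    simpa using pow_apply_of_mem_eigenspace hFv m
  exact (congrArg (LinearMap.trace k _) hi).trans (map_smul _ _ _)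

lemma trace_eq_sum_mul_finrank_eigenspace [Fintype ι] [DecidableEq ι] {F : End k V}
    {χ : ι → k} (hF : DirectSum.IsInternal fun i => F.eigenspace (χ i)) :
    LinearMap.trace k V F = ∑ i, χ i * finrank k (F.eigenspace (χ i)) := by
  have h := trace_pow_mul_eq_sum_pow_mul_trace_restrict (Commute.one_right F) hF 1
  simp only [pow_one, mul_one] at h
  rw [h]
  refine Finset.sum_congr rfl fun i _ => ?_
  rw [← LinearMap.trace_one]
  rfl

lemma trace_restrict_eigenspace_eq_zero [Finite ι] [DecidableEq ι] {F G : End k V}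
    (h : Commute G F) {χ : ι → k} (hχ : Function.Injective χ)
    (hG : DirectSum.IsInternal fun i => G.eigenspace (χ i))
    (htr : ∀ m : ℕ, LinearMap.trace k V (G ^ m * F) = 0) (i : ι) :
    LinearMap.trace k _ (restrictEigenspace h (χ i)) = 0 := by
  have := Fintype.ofFinite ι
  let e := Fintype.equivFin ι
  obtain ⟨j, rfl⟩ := e.symm.surjective i
  have hv := Matrix.eq_zero_of_forall_pow_sum_mul_pow_eq_zero
    (f := χ ∘ e.symm) (v := fun j => LinearMap.trace k _ (restrictEigenspace h (χ (e.symm j))))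
    (hχ.comp e.symm.injective) fun m => by
      rw [← htr m, trace_pow_mul_eq_sum_pow_mul_trace_restrict h hG,
        ← e.symm.sum_comp]
      simp only [Function.comp_apply, mul_comm]
  exact congr_fun hv j

lemma sum_mul_finrank_eigenspace_inf_eigenspace_eq_zero [Fintype ι] [Nonempty ι] [Fintype κ]
    {F G : End k V} (h : Commute G F) (hF : F ^ Fintype.card ι = 1)
    (hG : G ^ Fintype.card κ = 1) {χ : ι → k} (hχ : Function.Injective χ)
    (hχ1 : ∀ i, χ i ^ Fintype.card ι = 1) {ψ : κ → k} (hψ : Function.Injective ψ)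
    (hψ1 : ∀ j, ψ j ^ Fintype.card κ = 1)
    (htr : ∀ m : ℕ, LinearMap.trace k V (G ^ m * F) = 0) (j : κ) :
    ∑ i, χ i * finrank k ↥(F.eigenspace (χ i) ⊓ G.eigenspace (ψ j)) = 0 := by
  classical
  have : Nonempty κ := ⟨j⟩
  have hpow : restrictEigenspace h (ψ j) ^ Fintype.card ι = 1 := by
    ext v
    simp [coe_restrictEigenspace_pow_apply, hF]
  rw [← trace_restrict_eigenspace_eq_zero h hψ
      (isInternal_eigenspace_of_pow_card_eq_one hG hψ hψ1) htr j,
    trace_eq_sum_mul_finrank_eigenspace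
      (isInternal_eigenspace_of_pow_card_eq_one hpow hχ hχ1)]
  simp only [finrank_eigenspace_restrictEigenspace]

end Field

end Eigenspaces

section HopfEigenspace

variable {k H : Type*} [Field k] [Ring H] [HopfAlgebra k H] [FiniteDimensional k H] {g : H}

lemma IsDistinguishedGroupLike.sum_mul_finrank_hopfEigenspace_eq_zero [NeZero (2 : k)]
    (hg : IsDistinguishedGroupLike k g) {n : ℕ} [NeZero n] (hn : Odd n) (hn1 : n ≠ 1)
    (hidx : IsHopfIndex k g n) {ω : k} (hω : IsPrimitiveRoot ω n) (j : ZMod n) :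
    ∑ t : ZMod 2 × ZMod n, ((-1 : k) ^ t.1.val * ω ^ t.2.val) *
      Module.finrank k (hopfEigenspace g ω (t.1, t.2, j)) = 0 := by
  have hcard : Fintype.card (ZMod 2 × ZMod n) = 2 * n := by simp
  have hchar : ringChar k ≠ 2 := fun h =>
    NeZero.ne (2 : k) (by simpa [h] using ringChar.Nat.cast_ringChar (R := k))
  have hψ : Function.Injective fun j : ZMod n => ω ^ j.val := fun i j h =>
    ZMod.val_injective n (hω.pow_inj i.val_lt j.val_lt h)
  refine sum_mul_finrank_eigenspace_inf_eigenspace_eq_zero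
    (commute_mulRight_antipode_sq hg.1.isGroupLikeElem_s7) ?_ ?_
    (injective_pow_val_mul_pow_val hn.coprime_two_left (.neg_one _ hchar) hω) (fun t => ?_)
    hψ (fun j => ?_) (hg.trace_mulRight_pow_mul_antipode_sq_eq_zero hidx hn1) j
  · rw [hcard, ← pow_mul, ← mul_assoc]
    exact hidx.2.1
  · rw [ZMod.card, LinearMap.pow_mulRight, hidx.2.2.1, LinearMap.mulRight_one]
    rfl
  · rw [hcard, mul_pow, pow_right_comm, pow_mul (-1 : k), pow_right_comm ω, mul_comm 2 n, pow_mul ω,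
      hω.pow_eq_one]
    simp
  · rw [ZMod.card, pow_right_comm, hω.pow_eq_one, one_pow]

end HopfEigenspace

theorem stmt7_general (k : Type*) [Field k] [CharZero k]
    (p : ℕ) (hp : p.Prime) (hpodd : Odd p)
    (H : Type*) [Ring H] [HopfAlgebra k H] [FiniteDimensional k H]
    (g : H) (hg : IsDistinguishedGroupLike k g) (hidx : IsHopfIndex k g p)
    (ω : k) (hω : IsPrimitiveRoot ω p) :
    ∀ j : ZMod p, ∃ d : ℤ, ∀ i : ZMod p,
      (Module.finrank k (hopfEigenspace g ω ((0 : ZMod 2), i, j)) : ℤ) -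
        (Module.finrank k (hopfEigenspace g ω ((1 : ZMod 2), i, j)) : ℤ) = d := by
  intro j
  have : Fact p.Prime := ⟨hp⟩
  let dim (a : ZMod 2) (i : ZMod p) : ℕ := Module.finrank k (hopfEigenspace g ω (a, i, j))
  have hsum : ∑ i, ((dim 0 i : ℚ) - dim 1 i) • ω ^ i.val = 0 := by
    rw [← hg.sum_mul_finrank_hopfEigenspace_eq_zero hpodd hp.ne_one hidx hω j,
      Fintype.sum_prod_type_right]
    refine Finset.sum_congr rfl fun i _ => ?_
    refine .trans ?_ (Fin.sum_univ_two _).symm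
    change _ = (-1 : k) ^ 0 * ω ^ i.val * dim 0 i + (-1 : k) ^ 1 * ω ^ i.val * dim 1 i
    rw [Algebra.smul_def, map_sub, map_natCast, map_natCast]
    ring
  exact ⟨(dim 0 0 : ℤ) - dim 1 0, fun i => mod_cast eq_of_sum_smul_pow_eq_zero hω hsum i 0⟩

/-- Lemma 5.5. Let `p` be an odd prime, `H` a Hopf algebra of index `p` over
an algebraically closed field of characteristic `0`, and `ω` a primitive `p`-th root of unity.
Then for each `j ∈ ℤ/p` there is an integer `d_j` with
`dim H^ω_{0,i,j} − dim H^ω_{1,i,j} = d_j` for every `i ∈ ℤ/p`. -/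
theorem stmt7 (k : Type*) [Field k] [IsAlgClosed k] [CharZero k]
    (p : ℕ) (hp : p.Prime) (hpodd : Odd p)
    (H : Type*) [Ring H] [HopfAlgebra k H] [FiniteDimensional k H]
    (g : H) (hg : IsDistinguishedGroupLike k g) (hidx : IsHopfIndex k g p)
    (ω : k) (hω : IsPrimitiveRoot ω p) :
    ∀ j : ZMod p, ∃ d : ℤ, ∀ i : ZMod p,
      (Module.finrank k (hopfEigenspace g ω ((0 : ZMod 2), i, j)) : ℤ) -
        (Module.finrank k (hopfEigenspace g ω ((1 : ZMod 2), i, j)) : ℤ) = d :=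
  stmt7_general k p hp hpodd H g hg hidx ω hω
end
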